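/- For every i ∈ Σ_{n+1} and every • ∈ {A, D}, there is a canonical injection GP(C_•(i)) ↪ GP(i), and its image is exactly the set of rigorous paths P of G(i) such that no switching node of P lies on the wire ℓ_•, where ℓ_D := ℓ_{n+1} and ℓ_A := ℓ_1. -/

import Mathlib

open scoped Classical

noncomputable section

namespace StringPolytope

/-! ### Words, reduced words, two-moves -/

/-- the simple transposition `s_a = (a, a+1)` acting on `ℕ` (wires are `1, …, n+1`). -/
def sTrans (a : ℕ) : Equiv.Perm ℕ := Equiv.swap a (a + 1)

/-- product `s_{i₁} ⋯ s_{i_N}` of the simple transpositions of a word. -/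
def wordProd (w : List ℕ) : Equiv.Perm ℕ := (w.map sTrans).prod

/-- the longest element `w₀` of the symmetric group on `{1, …, n+1}`,
sending `k ↦ n + 2 - k` there and fixing everything else. -/
def longestPerm (n : ℕ) : Equiv.Perm ℕ :=
  Function.Involutive.toPerm
    (fun k => if 1 ≤ k ∧ k ≤ n + 1 then n + 2 - k else k)
    (by intro k; dsimp only; split_ifs <;> omega)

/-- `w ∈ Σ_{n+1}`: a reduced word of the longest element of `S_{n+1}`,
i.e. a word over `[n] = {1,…,n}` of length `N = n(n+1)/2` whose product is `w₀`. -/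
def IsReduced (n : ℕ) (w : List ℕ) : Prop :=
  w.length = n * (n + 1) / 2 ∧ (∀ a ∈ w, 1 ≤ a ∧ a ≤ n) ∧ wordProd w = longestPerm n

/-- a single 2-move: exchange two adjacent letters `(a, b)` with `|a - b| > 1`. -/
def TwoMoveStep (w w' : List ℕ) : Prop :=
  ∃ u v a b, (a + 1 < b ∨ b + 1 < a) ∧ w = u ++ a :: b :: v ∧ w' = u ++ b :: a :: v

/-- 2-move equivalence of words. -/
def TwoMoveEquiv : List ℕ → List ℕ → Prop := Relation.ReflTransGen TwoMoveStep

/-- `A_n = (1, 2, …, n)`. -/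
def ascWord (n : ℕ) : List ℕ := (List.range n).map (· + 1)

/-- `D_n = (n, n-1, …, 1)`. -/
def descWord (n : ℕ) : List ℕ := (ascWord n).reverse

/-! ### The wiring diagram -/

/-- the letter `i_j` of `w` (1-based index `j`); the node `t_j` lies in column `i_j`. -/
def letterAt (w : List ℕ) (j : ℕ) : ℕ := w.getD (j - 1) 0

/-- `1 ≤ j ≤ N`: `t_j` is an actual node of the diagram. -/
def ValidNode (w : List ℕ) (j : ℕ) : Prop := 1 ≤ j ∧ j ≤ w.length

/-- the column-to-wire assignment just above node `t_j`
(at the top of the diagram, wire `k` is in column `k`). -/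
def stateAbove (w : List ℕ) (j : ℕ) : Equiv.Perm ℕ := wordProd (w.take (j - 1))

/-- the column-to-wire assignment just below node `t_j`. -/
def stateBelow (w : List ℕ) (j : ℕ) : Equiv.Perm ℕ := wordProd (w.take j)

/-- one of the two wires crossing at node `t_j` (the one leaving upward-left). -/
def wireX (w : List ℕ) (j : ℕ) : ℕ := stateAbove w j (letterAt w j)

/-- the other wire crossing at node `t_j` (the one leaving upward-right). -/
def wireY (w : List ℕ) (j : ℕ) : ℕ := stateAbove w j (letterAt w j + 1)

/-- the node `t_j` lies on the wire `ℓ_r`. -/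
def NodeOnWire (w : List ℕ) (j r : ℕ) : Prop := wireX w j = r ∨ wireY w j = r

/-- given one wire `r` at node `t_j`, the other wire crossing there. -/
def otherWire (w : List ℕ) (j r : ℕ) : ℕ := if wireX w j = r then wireY w j else wireX w j

/-- the column of wire `ℓ_r` at the height of node `t_j`. -/
def wireCol (w : List ℕ) (j r : ℕ) : ℕ := (stateBelow w j).symm r

/-- node `t_j` lies strictly below the wire `ℓ_{n+1}`
(which runs from the bottom-left corner to the top-right corner). -/
def BelowWireLast (n : ℕ) (w : List ℕ) (j : ℕ) : Prop :=
  wireCol w j (n + 1) < letterAt w j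

/-- node `t_j` lies strictly above the wire `ℓ_{n+1}`. -/
def AboveWireLast (n : ℕ) (w : List ℕ) (j : ℕ) : Prop :=
  letterAt w j + 1 < wireCol w j (n + 1)

/-- node `t_j` lies strictly below the wire `ℓ_1`
(which runs from the bottom-right corner to the top-left corner). -/
def BelowWireOne (w : List ℕ) (j : ℕ) : Prop :=
  letterAt w j + 1 < wireCol w j 1

/-- node `t_j` lies strictly above the wire `ℓ_1`. -/
def AboveWireOne (w : List ℕ) (j : ℕ) : Prop :=
  wireCol w j 1 < letterAt w j

/-! ### Rigorous (Gleizer–Postnikov) paths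

A path in `G(i, k)` is encoded by `k` together with the list of its switching
nodes, in order of travel.  Wires `ℓ_1, …, ℓ_k` are oriented upward
(decreasing node index) and the remaining wires downward. -/

/-- the (1-based indices of the) nodes lying on wire `ℓ_r`, in order of increasing index. -/
def nodesOn (w : List ℕ) (r : ℕ) : List ℕ :=
  ((List.range w.length).map (· + 1)).filter (fun j => decide (NodeOnWire w j r))

/-- nodes on wire `ℓ_r` strictly between the nodes `t_a` and `t_b`. -/
def segList (w : List ℕ) (r a b : ℕ) : List ℕ :=
  (nodesOn w r).filter (fun j => decide (min a b < j ∧ j < max a b))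

/-- nodes on wire `ℓ_r` strictly below the node `t_a`. -/
def tailList (w : List ℕ) (r a : ℕ) : List ℕ :=
  (nodesOn w r).filter (fun j => decide (a < j))

/-- a forbidden fragment of `G(i, k)`: the path passes straight through node `t_j`
travelling along the wire `ℓ_r`, where the other wire `ℓ_b` crossing there has the same
orientation as `ℓ_r` and (`r < b` if both upward, `r > b` if both downward). -/
def Forbidden (w : List ℕ) (k j r : ℕ) : Prop :=
  (r ≤ k ∧ otherWire w j r ≤ k ∧ r < otherWire w j r) ∨
  (k < r ∧ k < otherWire w j r ∧ otherWire w j r < r)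

/-- travelling in `G(i,k)`: currently on wire `ℓ_r` at node `t_a` (just switched there),
with future switching nodes `ms`; the travel is legal and ends at `L_{k+1}`. -/
def TravelOK (w : List ℕ) (k : ℕ) : ℕ → ℕ → List ℕ → Prop
  | r, a, [] => r = k + 1 ∧ ∀ j ∈ tailList w r a, ¬ Forbidden w k j r
  | r, a, m :: ms =>
      ValidNode w m ∧ NodeOnWire w m r ∧
      (if r ≤ k then m < a else a < m) ∧
      (∀ j ∈ segList w r a m, ¬ Forbidden w k j r) ∧
      TravelOK w k (otherWire w m r) m ms

/-- all nodes visited after the switch at node `t_a` onto wire `ℓ_r`. -/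
def visitTail (w : List ℕ) : ℕ → ℕ → List ℕ → List ℕ
  | r, a, [] => tailList w r a
  | r, a, m :: ms => segList w r a m ++ m :: visitTail w (otherWire w m r) m ms

/-- the list of all nodes visited by the path (switching nodes and straight passes). -/
def visitList (w : List ℕ) (k : ℕ) : List ℕ → List ℕ
  | [] => []
  | m :: ms => tailList w k m ++ m :: visitTail w (otherWire w m k) m ms

/-- `(k, ms)` encodes a rigorous (Gleizer–Postnikov) path in `G(i, k)`:
it starts at `L_k` going up the wire `ℓ_k`, switches wires exactly at the nodes
listed in `ms`, respects the orientation, ends at `L_{k+1}`, contains no forbidden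
fragment and passes through each node at most once. -/
def IsGPPath (n : ℕ) (w : List ℕ) (k : ℕ) (ms : List ℕ) : Prop :=
  1 ≤ k ∧ k ≤ n ∧
  (match ms with
   | [] => False
   | m :: rest =>
       ValidNode w m ∧ NodeOnWire w m k ∧
       (∀ j ∈ tailList w k m, ¬ Forbidden w k j k) ∧
       TravelOK w k (otherWire w m k) m rest) ∧
  (visitList w k ms).Nodup

/-- the set `GP(i)` of all rigorous paths of `G(i)`. -/
def GP (n : ℕ) (w : List ℕ) : Set (ℕ × List ℕ) := {p | IsGPPath n w p.1 p.2}

/-- `|GP(i)|`, the number of rigorous paths. -/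
def numGP (n : ℕ) (w : List ℕ) : ℕ := (GP n w).ncard

/-- the successive switches of a path: `(node, from-wire, to-wire)`. -/
def pathSwitches (w : List ℕ) : ℕ → List ℕ → List (ℕ × ℕ × ℕ)
  | _, [] => []
  | r, m :: ms => (m, r, otherWire w m r) :: pathSwitches w (otherWire w m r) ms

/-- the wire-expression of a path: the successive wires travelled. -/
def wireSeq (w : List ℕ) : ℕ → List ℕ → List ℕ
  | r, [] => [r]
  | r, m :: ms => r :: wireSeq w (otherWire w m r) ms

/-- the peaks of a path: switching nodes where the path switches from an
upward wire to a downward wire. -/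
def peaks (w : List ℕ) (k : ℕ) (ms : List ℕ) : List ℕ :=
  ((pathSwitches w k ms).filter (fun e => decide (e.2.1 ≤ k ∧ k < e.2.2))).map (·.1)

/-! ### String cone, `λ`-cone, string polytope -/

/-- `N = n(n+1)/2`, the number of nodes. -/
abbrev Dim (n : ℕ) : ℕ := n * (n + 1) / 2

/-- the coefficient `a_j` of `t_j` in the string inequality of the path `(k, ms)`:
`+1` if the path switches at `t_j` from `ℓ_r` to `ℓ_s` with `r < s`,
`-1` if it switches with `r > s`, and `0` otherwise. -/
def coeff (w : List ℕ) (k : ℕ) (ms : List ℕ) (j : ℕ) : ℝ :=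
  ((pathSwitches w k ms).map (fun e =>
    if e.1 = j then (if e.2.1 < e.2.2 then (1 : ℝ) else -1) else 0)).sum

/-- the (primitive inward normal) coefficient vector of the string inequality of a path. -/
def normalVec (n : ℕ) (w : List ℕ) (p : ℕ × List ℕ) : Fin (Dim n) → ℝ :=
  fun j => coeff w p.1 p.2 ((j : ℕ) + 1)

/-- the left-hand side `∑ a_j t_j` of the string inequality of the path `p`. -/
def stringIneq (n : ℕ) (w : List ℕ) (p : ℕ × List ℕ) (t : Fin (Dim n) → ℝ) : ℝ :=
  ∑ j : Fin (Dim n), normalVec n w p j * t j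

/-- the string cone `C_i ⊆ ℝ^N`. -/
def stringCone (n : ℕ) (w : List ℕ) : Set (Fin (Dim n) → ℝ) :=
  {t | ∀ p ∈ GP n w, 0 ≤ stringIneq n w p t}

/-- the polyhedron cut out by all string inequalities except the one of `p₀`. -/
def stringConeExcept (n : ℕ) (w : List ℕ) (p₀ : ℕ × List ℕ) : Set (Fin (Dim n) → ℝ) :=
  {t | ∀ p ∈ GP n w, p ≠ p₀ → 0 ≤ stringIneq n w p t}

/-- the coefficient `a_k` in the `λ`-inequality of node `t_j`:
`1` if `t_k` is one column left or right of `t_j`, `-2` if in the same column. -/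
def lamCoeff (w : List ℕ) (j k : ℕ) : ℝ :=
  if letterAt w k = letterAt w j then -2
  else if letterAt w k = letterAt w j + 1 ∨ letterAt w k + 1 = letterAt w j then 1
  else 0

/-- the `λ`-inequality of node `t_{j+1}`:
`t_j ≤ λ_{i_j} + ∑_{k > j} a_k t_k`. -/
def LamIneq (n : ℕ) (w : List ℕ) (lam : ℕ → ℤ) (j : Fin (Dim n)) (t : Fin (Dim n) → ℝ) : Prop :=
  t j ≤ (lam (letterAt w ((j : ℕ) + 1)) : ℝ) +
    ∑ k : Fin (Dim n),
      (if (j : ℕ) < (k : ℕ) then lamCoeff w ((j : ℕ) + 1) ((k : ℕ) + 1) else 0) * t k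

/-- the `λ`-cone `C_i^λ ⊆ ℝ^N`. -/
def lamCone (n : ℕ) (w : List ℕ) (lam : ℕ → ℤ) : Set (Fin (Dim n) → ℝ) :=
  {t | ∀ j, LamIneq n w lam j t}

/-- the polyhedron cut out by all `λ`-inequalities except the one of `j₀`. -/
def lamConeExcept (n : ℕ) (w : List ℕ) (lam : ℕ → ℤ) (j₀ : Fin (Dim n)) :
    Set (Fin (Dim n) → ℝ) :=
  {t | ∀ j, j ≠ j₀ → LamIneq n w lam j t}

/-- the string polytope `Δ_i(λ) = C_i ∩ C_i^λ`. -/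
def stringPolytope (n : ℕ) (w : List ℕ) (lam : ℕ → ℤ) : Set (Fin (Dim n) → ℝ) :=
  stringCone n w ∩ lamCone n w lam

/-- `λ = λ_1 ϖ_1 + ⋯ + λ_n ϖ_n` is a dominant integral weight: all `λ_j ≥ 0`. -/
def Dominant (n : ℕ) (lam : ℕ → ℤ) : Prop := ∀ j, 1 ≤ j → j ≤ n → 0 ≤ lam j

/-- `λ` is a regular dominant integral weight: all `λ_j > 0`. -/
def RegularDominant (n : ℕ) (lam : ℕ → ℤ) : Prop := ∀ j, 1 ≤ j → j ≤ n → 0 < lam j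

/-! ### Unimodular equivalence, Gelfand–Cetlin polytope, facets -/

/-- `P` and `Q` are unimodularly equivalent: `Q = M(P) + v` with `M ∈ GL(m, ℤ)`, `v ∈ ℤ^m`. -/
def UnimodEquiv {m : ℕ} (P Q : Set (Fin m → ℝ)) : Prop :=
  ∃ (M : Matrix (Fin m) (Fin m) ℤ) (v : Fin m → ℤ), IsUnit M.det ∧
    Q = (fun x i => (∑ j, (M i j : ℝ) * x j) + (v i : ℝ)) '' P

/-- the entry `x_{k,j}` (`1 ≤ j ≤ k ≤ n+1`) of a Gelfand–Cetlin pattern, where the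
top row is `x_{n+1,j} = λ_j + ⋯ + λ_n` and `x_{n+1,n+1} = 0`; the pair `(k, j)` is
encoded as the coordinate `k(k-1)/2 + (j-1)` of `ℝ^N`. -/
def gcX (n : ℕ) (lam : ℕ → ℤ) (x : Fin (Dim n) → ℝ) (k j : ℕ) : ℝ :=
  if k = n + 1 then (if j ≤ n then ∑ t ∈ Finset.Icc j n, (lam t : ℝ) else 0)
  else if h : k * (k - 1) / 2 + (j - 1) < Dim n then x ⟨k * (k - 1) / 2 + (j - 1), h⟩ else 0

/-- the Gelfand–Cetlin polytope `GC(λ) ⊆ ℝ^N`. -/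
def GCPolytope (n : ℕ) (lam : ℕ → ℤ) : Set (Fin (Dim n) → ℝ) :=
  {x | ∀ k j, 1 ≤ k → k ≤ n → 1 ≤ j → j ≤ k →
      gcX n lam x k j ≤ gcX n lam x (k + 1) j ∧
      gcX n lam x (k + 1) (j + 1) ≤ gcX n lam x k j}

/-- a face of a convex set: a convex extreme subset. -/
def IsFaceSet {m : ℕ} (S F : Set (Fin m → ℝ)) : Prop := IsExtreme ℝ S F ∧ Convex ℝ F

/-- a facet: a maximal proper face. -/
def IsFacet {m : ℕ} (S F : Set (Fin m → ℝ)) : Prop :=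
  IsFaceSet S F ∧ F ≠ S ∧ ∀ G, IsFaceSet S G → G ≠ S → F ⊆ G → F = G

/-- the number of facets. -/
def numFacets {m : ℕ} (S : Set (Fin m → ℝ)) : ℕ := {F | IsFacet S F}.ncard

/-- combinatorial equivalence: an inclusion-preserving bijection between face lattices. -/
def CombEquiv {m : ℕ} (S T : Set (Fin m → ℝ)) : Prop :=
  ∃ e : {F // IsFaceSet S F} ≃ {F // IsFaceSet T F},
    ∀ F G : {F // IsFaceSet S F}, F.1 ⊆ G.1 ↔ (e F).1 ⊆ (e G).1

/-! ### Indices, contractions and extensions -/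

/-- the `D`-index `ind_D(i) = |i_D^+|` for a decomposition `i ∼ i_D^- D_n i_D^+`
(independent of the decomposition). -/
def indD (n : ℕ) (w : List ℕ) : ℕ :=
  sInf {s | ∃ u v : List ℕ, v.length = s ∧ TwoMoveEquiv w (u ++ descWord n ++ v)}

/-- the `A`-index `ind_A(i) = |i_A^+|` for a decomposition `i ∼ i_A^- A_n i_A^+`. -/
def indA (n : ℕ) (w : List ℕ) : ℕ :=
  sInf {s | ∃ u v : List ℕ, v.length = s ∧ TwoMoveEquiv w (u ++ ascWord n ++ v)}

/-- `w'` is a `D`-contraction `C_D(w) = i_D^- (i_D^+ - 1)` of `w ∈ Σ_{n+1}`. -/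
def IsContractionD (n : ℕ) (w w' : List ℕ) : Prop :=
  ∃ u v : List ℕ, TwoMoveEquiv w (u ++ descWord n ++ v) ∧ w' = u ++ v.map (· - 1)

/-- `w'` is an `A`-contraction `C_A(w) = (i_A^- - 1) i_A^+` of `w ∈ Σ_{n+1}`. -/
def IsContractionA (n : ℕ) (w w' : List ℕ) : Prop :=
  ∃ u v : List ℕ, TwoMoveEquiv w (u ++ ascWord n ++ v) ∧ w' = u.map (· - 1) ++ v

/-- the `D`-extension `E_D(s) : Σ_{n+1} → Σ_{n+2}`,
`i = i^-(s) i^+(s) ↦ i^-(s) D_{n+1} (i^+(s) + 1)` where `|i^+(s)| = s`. -/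
def extD (n : ℕ) (s : ℕ) (w : List ℕ) : List ℕ :=
  w.take (w.length - s) ++ descWord (n + 1) ++ (w.drop (w.length - s)).map (· + 1)

/-- the `A`-extension `E_A(s) : Σ_{n+1} → Σ_{n+2}`,
`i = i^-(s) i^+(s) ↦ (i^-(s) + 1) A_{n+1} i^+(s)`. -/
def extA (n : ℕ) (s : ℕ) (w : List ℕ) : List ℕ :=
  (w.take (w.length - s)).map (· + 1) ++ ascWord (n + 1) ++ w.drop (w.length - s)

/-- there exists `(σ_1, …, σ_n) ∈ {A, D}^n` (here `true = D`, `false = A`) such that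
`ind_{σ_k}(C_{σ_{k+1}} ∘ ⋯ ∘ C_{σ_n}(i)) = 0` for all `k = n, …, 1`. -/
def SimplicialWord (n : ℕ) (w : List ℕ) : Prop :=
  ∃ (σ : ℕ → Bool) (c : ℕ → List ℕ), c n = w ∧
    ∀ k, 1 ≤ k → k ≤ n →
      (if σ k then IsContractionD k (c k) (c (k - 1)) ∧ indD k (c k) = 0
       else IsContractionA k (c k) (c (k - 1)) ∧ indA k (c k) = 0)


/-- the `D`-coindex `coind_D(i) = |i_D^-|`. -/
def coindD (n : ℕ) (w : List ℕ) : ℕ :=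
  sInf {s | ∃ u v : List ℕ, u.length = s ∧ TwoMoveEquiv w (u ++ descWord n ++ v)}

/-- the `A`-coindex `coind_A(i) = |i_A^-|`. -/
def coindA (n : ℕ) (w : List ℕ) : ℕ :=
  sInf {s | ∃ u v : List ℕ, u.length = s ∧ TwoMoveEquiv w (u ++ ascWord n ++ v)}

/-- the `a`-th (0-based) coordinate of a point of `ℝ^N`. -/
def entry (n : ℕ) (t : Fin (Dim n) → ℝ) (a : ℕ) : ℝ :=
  if h : a < Dim n then t ⟨a, h⟩ else 0

/-- the product of cones
`t_1 ≥ 0`, `t_2 ≥ t_3 ≥ 0`, …, `t_{N-n+1} ≥ ⋯ ≥ t_N ≥ 0` (in `ℝ^N`, 1-based: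
for `k = 1, …, n` the chain `t_{k(k-1)/2+1} ≥ ⋯ ≥ t_{k(k-1)/2+k} ≥ 0`). -/
def chainCone (n : ℕ) : Set (Fin (Dim n) → ℝ) :=
  {t | ∀ k j, 1 ≤ k → k ≤ n → 1 ≤ j → j ≤ k →
    (if j = k then 0 else entry n t (k * (k - 1) / 2 + j)) ≤
      entry n t (k * (k - 1) / 2 + (j - 1))}

/-!
Every two wires of a reduced diagram cross exactly once. The strand `ℓ` entering the block `D_n`
(resp. `A_n`) in its last (resp. first) column meets all other wires inside the block, so it runs
straight through the rest of the diagram: it is `ℓ_{n+1}` (resp. `ℓ_1`), and deleting the block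
erases exactly this wire and the nodes on it. A 2-move only permutes the nodes, preserving their
order along each wire, so the nodes of the contracted diagram embed into those of the original one.

Passing straight through a crossing with the extreme wire `ℓ` is never forbidden, hence paths
lift. Only the condition that nodes are visited at most once needs care. If a node on `ℓ` were
visited twice by a path which does not switch on `ℓ`, both visits would pass through it along the
same other wire, and the start of one of the two strands, a node off `ℓ`, would be visited twice
as well.
-/

/-! ### Words and wires -/

lemma sTrans_apply (a x : ℕ) :
    sTrans a x = if x = a then a + 1 else if x = a + 1 then a else x :=
  Equiv.swap_apply_def a (a + 1) x

lemma sTrans_mul_comm {a b : ℕ} (h : a + 1 < b ∨ b + 1 < a) :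
    sTrans a * sTrans b = sTrans b * sTrans a := by
  ext x
  simp only [Equiv.Perm.mul_apply, sTrans_apply]
  split_ifs <;> omega

lemma wordProd_nil : wordProd [] = 1 := rfl

lemma wordProd_cons (a : ℕ) (w : List ℕ) : wordProd (a :: w) = sTrans a * wordProd w := by
  simp [wordProd]

lemma wordProd_singleton (a : ℕ) : wordProd [a] = sTrans a := by
  simp [wordProd]

lemma wordProd_append (u v : List ℕ) : wordProd (u ++ v) = wordProd u * wordProd v := by
  simp [wordProd]

lemma wordProd_reverse (w : List ℕ) : wordProd w.reverse = (wordProd w)⁻¹ := by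
  induction w with
  | nil => rfl
  | cons a w ih =>
    rw [List.reverse_cons, wordProd_append, ih, wordProd_singleton, wordProd_cons, mul_inv_rev]
    simp [sTrans]

lemma wordProd_mem_Icc {lo hi : ℕ} {w : List ℕ} (hw : ∀ a ∈ w, lo ≤ a ∧ a < hi) {x : ℕ}
    (hx : x ∈ Finset.Icc lo hi) : wordProd w x ∈ Finset.Icc lo hi := by
  induction w with
  | nil => exact hx
  | cons a w ih =>
    have hwx := ih fun b hb => hw b (List.mem_cons_of_mem a hb)
    have ha := hw a List.mem_cons_self
    rw [wordProd_cons, Equiv.Perm.mul_apply, sTrans_apply]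
    rw [Finset.mem_Icc] at hwx ⊢
    split_ifs <;> omega

lemma wordProd_apply_succ {w : List ℕ} (hw : ∀ a ∈ w, 1 ≤ a) (x : ℕ) :
    wordProd w (x + 1) = wordProd (w.map (· - 1)) x + 1 := by
  induction w with
  | nil => rfl
  | cons a w ih =>
    have ha := hw a List.mem_cons_self
    rw [List.map_cons, wordProd_cons, wordProd_cons, Equiv.Perm.mul_apply, Equiv.Perm.mul_apply,
      ih fun b hb => hw b (List.mem_cons_of_mem a hb), sTrans_apply, sTrans_apply]
    split_ifs <;> omega

lemma validNode_append {u v : List ℕ} {t : ℕ} :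
    ValidNode (u ++ v) t ↔ ValidNode u t ∨ ∃ s, ValidNode v s ∧ t = u.length + s := by
  simp only [ValidNode, List.length_append]
  constructor
  · intro h
    by_cases htu : t ≤ u.length
    · exact Or.inl ⟨h.1, htu⟩
    · exact Or.inr ⟨t - u.length, by omega, by omega⟩
  · rintro (h | ⟨s, hs, rfl⟩) <;> omega

lemma validNode_singleton {a t : ℕ} : ValidNode [a] t ↔ t = 1 := by
  simp only [ValidNode, List.length_singleton]
  omega

lemma stateAbove_append_left {u : List ℕ} {t : ℕ} (ht : ValidNode u t) (v : List ℕ) :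
    stateAbove (u ++ v) t = stateAbove u t := by
  rw [stateAbove, List.take_append_of_le_length (by have := ht.2; omega), stateAbove]

lemma letterAt_append_left {u : List ℕ} {t : ℕ} (ht : ValidNode u t) (v : List ℕ) :
    letterAt (u ++ v) t = letterAt u t :=
  List.getD_append u v 0 (t - 1) (by have := ht.1; have := ht.2; omega)

lemma stateAbove_append_right (u : List ℕ) {v : List ℕ} {t : ℕ} (ht : ValidNode v t) :
    stateAbove (u ++ v) (u.length + t) = wordProd u * stateAbove v t := by
  have h : u.length + t - 1 = u.length + (t - 1) := by have := ht.1; omega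
  rw [stateAbove, h, List.take_length_add_append, wordProd_append, stateAbove]

lemma letterAt_append_right (u : List ℕ) {v : List ℕ} {t : ℕ} (ht : ValidNode v t) :
    letterAt (u ++ v) (u.length + t) = letterAt v t := by
  have h : u.length + t - 1 = u.length + (t - 1) := by have := ht.1; omega
  rw [letterAt, h, List.getD_append_right _ _ _ _ (Nat.le_add_right _ _),
    Nat.add_sub_cancel_left, letterAt]

lemma letterAt_mem {w : List ℕ} {t : ℕ} (ht : ValidNode w t) : letterAt w t ∈ w := by
  have h : t - 1 < w.length := by have := ht.1; have := ht.2; omega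
  rw [letterAt, List.getD_eq_getElem _ _ h]
  exact List.getElem_mem h

lemma wireX_append_left {u : List ℕ} {t : ℕ} (ht : ValidNode u t) (v : List ℕ) :
    wireX (u ++ v) t = wireX u t := by
  rw [wireX, stateAbove_append_left ht, letterAt_append_left ht, wireX]

lemma wireY_append_left {u : List ℕ} {t : ℕ} (ht : ValidNode u t) (v : List ℕ) :
    wireY (u ++ v) t = wireY u t := by
  rw [wireY, stateAbove_append_left ht, letterAt_append_left ht, wireY]

lemma wireX_append_right (u : List ℕ) {v : List ℕ} {t : ℕ} (ht : ValidNode v t) :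
    wireX (u ++ v) (u.length + t) = wordProd u (wireX v t) := by
  rw [wireX, stateAbove_append_right u ht, letterAt_append_right u ht, Equiv.Perm.mul_apply, wireX]

lemma wireY_append_right (u : List ℕ) {v : List ℕ} {t : ℕ} (ht : ValidNode v t) :
    wireY (u ++ v) (u.length + t) = wordProd u (wireY v t) := by
  rw [wireY, stateAbove_append_right u ht, letterAt_append_right u ht, Equiv.Perm.mul_apply, wireY]

lemma wireX_append_middle (u : List ℕ) {d : List ℕ} {t : ℕ} (ht : ValidNode d t) (v : List ℕ) :
    wireX (u ++ d ++ v) (u.length + t) = wordProd u (wireX d t) := by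
  rw [wireX_append_left (validNode_append.mpr (Or.inr ⟨t, ht, rfl⟩)), wireX_append_right u ht]

lemma wireY_append_middle (u : List ℕ) {d : List ℕ} {t : ℕ} (ht : ValidNode d t) (v : List ℕ) :
    wireY (u ++ d ++ v) (u.length + t) = wordProd u (wireY d t) := by
  rw [wireY_append_left (validNode_append.mpr (Or.inr ⟨t, ht, rfl⟩)), wireY_append_right u ht]

lemma wireX_singleton (a : ℕ) : wireX [a] 1 = a := rfl

lemma wireY_singleton (a : ℕ) : wireY [a] 1 = a + 1 := rfl

lemma stateAbove_apply_succ {w : List ℕ} (hw : ∀ a ∈ w, 1 ≤ a) (t x : ℕ) :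
    stateAbove w t (x + 1) = stateAbove (w.map (· - 1)) t x + 1 := by
  rw [stateAbove, stateAbove, ← List.map_take]
  exact wordProd_apply_succ (fun a ha => hw a (List.mem_of_mem_take ha)) x

lemma letterAt_map_pred {w : List ℕ} (hw : ∀ a ∈ w, 1 ≤ a) {t : ℕ} (ht : ValidNode w t) :
    letterAt w t = letterAt (w.map (· - 1)) t + 1 := by
  have h : letterAt (w.map (· - 1)) t = letterAt w t - 1 := List.getD_map (l := w) 0 (· - 1)
  have := hw _ (letterAt_mem ht)
  omega

lemma wireX_map_pred {w : List ℕ} (hw : ∀ a ∈ w, 1 ≤ a) {t : ℕ} (ht : ValidNode w t) :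
    wireX w t = wireX (w.map (· - 1)) t + 1 := by
  rw [wireX, letterAt_map_pred hw ht, stateAbove_apply_succ hw, wireX]

lemma wireY_map_pred {w : List ℕ} (hw : ∀ a ∈ w, 1 ≤ a) {t : ℕ} (ht : ValidNode w t) :
    wireY w t = wireY (w.map (· - 1)) t + 1 := by
  rw [wireY, letterAt_map_pred hw ht, stateAbove_apply_succ hw, wireY]

lemma wireX_ne_wireY (w : List ℕ) (t : ℕ) : wireX w t ≠ wireY w t :=
  (stateAbove w t).injective.ne (Nat.succ_ne_self _).symm

lemma wires_mem_Icc {lo hi : ℕ} {w : List ℕ} (hw : ∀ a ∈ w, lo ≤ a ∧ a < hi) {t : ℕ}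
    (ht : ValidNode w t) : wireX w t ∈ Finset.Icc lo hi ∧ wireY w t ∈ Finset.Icc lo hi := by
  have hl := hw _ (letterAt_mem ht)
  have hpre : ∀ a ∈ w.take (t - 1), lo ≤ a ∧ a < hi := fun a ha => hw a (List.mem_of_mem_take ha)
  exact ⟨wordProd_mem_Icc hpre (Finset.mem_Icc.mpr ⟨hl.1, hl.2.le⟩),
    wordProd_mem_Icc hpre (Finset.mem_Icc.mpr ⟨by omega, hl.2⟩)⟩

lemma nodeOnWire_append_left {u : List ℕ} {t : ℕ} (ht : ValidNode u t) (v : List ℕ) (r : ℕ) :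
    NodeOnWire (u ++ v) t r ↔ NodeOnWire u t r := by
  rw [NodeOnWire, wireX_append_left ht, wireY_append_left ht, NodeOnWire]

lemma nodeOnWire_append_right (u : List ℕ) {v : List ℕ} {t : ℕ} (ht : ValidNode v t) (r : ℕ) :
    NodeOnWire (u ++ v) (u.length + t) (wordProd u r) ↔ NodeOnWire v t r := by
  rw [NodeOnWire, wireX_append_right u ht, wireY_append_right u ht, NodeOnWire,
    (wordProd u).injective.eq_iff, (wordProd u).injective.eq_iff]

lemma nodeOnWire_append_middle (u : List ℕ) {d : List ℕ} {t : ℕ} (ht : ValidNode d t)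
    (v : List ℕ) (r : ℕ) :
    NodeOnWire (u ++ d ++ v) (u.length + t) (wordProd u r) ↔ NodeOnWire d t r := by
  rw [nodeOnWire_append_left (validNode_append.mpr (Or.inr ⟨t, ht, rfl⟩)),
    nodeOnWire_append_right u ht]

lemma nodeOnWire_otherWire (w : List ℕ) (t r : ℕ) : NodeOnWire w t (otherWire w t r) := by
  unfold otherWire NodeOnWire
  split_ifs <;> simp

lemma otherWire_eq {w : List ℕ} {t r s : ℕ} (hr : NodeOnWire w t r) (hs : NodeOnWire w t s)
    (hrs : r ≠ s) : otherWire w t r = s := by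
  unfold otherWire
  unfold NodeOnWire at hr hs
  split_ifs <;> omega

lemma eq_of_nodeOnWire {w : List ℕ} {t r s ℓ : ℕ} (hr : NodeOnWire w t r)
    (hs : NodeOnWire w t s) (hℓ : NodeOnWire w t ℓ) (hrℓ : r ≠ ℓ) (hsℓ : s ≠ ℓ) : r = s := by
  rw [← otherWire_eq hℓ hr hrℓ.symm, otherWire_eq hℓ hs hsℓ.symm]

/-! ### Reduced words: every two wires cross exactly once -/

/-- The unordered pair of wires crossing at the node `t_j`. -/
def crossingPair (w : List ℕ) (j : ℕ) : Finset ℕ := {wireX w j, wireY w j}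

lemma crossingPair_append_middle (u : List ℕ) {d : List ℕ} {t : ℕ} (ht : ValidNode d t)
    (v : List ℕ) :
    crossingPair (u ++ d ++ v) (u.length + t) = (crossingPair d t).image (wordProd u) := by
  rw [crossingPair, wireX_append_middle u ht, wireY_append_middle u ht, crossingPair,
    Finset.image_insert, Finset.image_singleton]

lemma symm_wordProd_lt_symm_wordProd {w : List ℕ} {a b : ℕ} (hab : a < b)
    (hw : ∀ t, ValidNode w t → ¬ (wireX w t = a ∧ wireY w t = b)) :
    (wordProd w).symm a < (wordProd w).symm b := by
  induction w using List.reverseRecOn with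
  | nil => exact hab
  | append_singleton w l ih =>
    have hlt := ih fun t ht => by
      have := hw t (validNode_append.mpr (Or.inl ht))
      rwa [wireX_append_left ht, wireY_append_left ht] at this
    have hlast := hw (w.length + 1)
      (validNode_append.mpr (Or.inr ⟨1, validNode_singleton.mpr rfl, rfl⟩))
    rw [wireX_append_right w (validNode_singleton.mpr rfl),
      wireY_append_right w (validNode_singleton.mpr rfl), wireX_singleton, wireY_singleton,
      ← Equiv.eq_symm_apply, ← Equiv.eq_symm_apply] at hlast
    have hsymm : ∀ c, (wordProd (w ++ [l])).symm c = sTrans l ((wordProd w).symm c) := by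
      intro c
      rw [Equiv.symm_apply_eq, wordProd_append, wordProd_singleton, Equiv.Perm.mul_apply]
      simp [sTrans]
    rw [hsymm, hsymm, sTrans_apply, sTrans_apply]
    split_ifs <;> omega

lemma longestPerm_symm_apply {n c : ℕ} (hc : c ∈ Finset.Icc 1 (n + 1)) :
    (longestPerm n).symm c = n + 2 - c := by
  rw [Finset.mem_Icc] at hc
  exact if_pos hc

lemma IsReduced.exists_crossingPair_eq {n : ℕ} {w : List ℕ} (hw : IsReduced n w) {a b : ℕ}
    (ha : a ∈ Finset.Icc 1 (n + 1)) (hb : b ∈ Finset.Icc 1 (n + 1)) (hab : a < b) :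
    ∃ t, ValidNode w t ∧ crossingPair w t = {a, b} := by
  by_contra! hno
  have hlt := symm_wordProd_lt_symm_wordProd hab fun t ht h => hno t ht <| by
    rw [crossingPair, h.1, h.2]
  rw [hw.2.2, longestPerm_symm_apply ha, longestPerm_symm_apply hb] at hlt
  rw [Finset.mem_Icc] at hb
  omega

/- There are as many nodes as pairs of wires, and `w₀` inverts every pair, so every pair crosses
at least once, hence exactly once. -/
lemma IsReduced.injOn_crossingPair {n : ℕ} {w : List ℕ} (hw : IsReduced n w) :
    Set.InjOn (crossingPair w) {t | ValidNode w t} := by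
  have hset : {t | ValidNode w t} = (Finset.Icc 1 w.length : Set ℕ) := by
    ext t
    simp [ValidNode]
  rw [hset]
  refine Finset.injOn_of_surjOn_of_card_le (t := (Finset.Icc 1 (n + 1)).powersetCard 2)
    (crossingPair w) ?_ ?_ ?_
  · intro t ht
    have hbounds := wires_mem_Icc (hi := n + 1)
      (fun a ha => ⟨(hw.2.1 a ha).1, Nat.lt_succ_of_le (hw.2.1 a ha).2⟩)
      (t := t) (by simpa [ValidNode] using ht)
    rw [Finset.mem_coe, Finset.mem_powersetCard, crossingPair, Finset.insert_subset_iff,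
      Finset.singleton_subset_iff, Finset.card_pair (wireX_ne_wireY w t)]
    exact ⟨hbounds, rfl⟩
  · intro s hs
    obtain ⟨hsub, hcard⟩ := Finset.mem_powersetCard.mp hs
    obtain ⟨a, b, hab, rfl⟩ := Finset.card_eq_two.mp hcard
    rw [Finset.insert_subset_iff, Finset.singleton_subset_iff] at hsub
    have hcross : ∃ t, ValidNode w t ∧ crossingPair w t = {a, b} := by
      rcases hab.lt_or_gt with h | h
      · exact hw.exists_crossingPair_eq hsub.1 hsub.2 h
      · rw [Finset.pair_comm]
        exact hw.exists_crossingPair_eq hsub.2 hsub.1 h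
    obtain ⟨t, ht, heq⟩ := hcross
    exact ⟨t, by simpa [ValidNode] using ht, heq⟩
  · rw [Finset.card_powersetCard, Nat.card_Icc, Nat.card_Icc, Nat.choose_two_right, hw.1,
      Nat.add_sub_cancel, Nat.add_sub_cancel, Nat.add_sub_cancel, mul_comm]

/-! ### The wire entering `D_n` or `A_n` -/

/-- The wire `ℓ_r` meets no crossing of the diagram of `w`. -/
def AvoidsWire (w : List ℕ) (r : ℕ) : Prop := ∀ t, ValidNode w t → ¬ NodeOnWire w t r

lemma AvoidsWire.of_append_left {u v : List ℕ} {r : ℕ} (h : AvoidsWire (u ++ v) r) :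
    AvoidsWire u r := fun t ht hr =>
  h t (validNode_append.mpr (Or.inl ht)) ((nodeOnWire_append_left ht v r).mpr hr)

lemma AvoidsWire.of_append_right {u v : List ℕ} {r : ℕ} (h : AvoidsWire (u ++ v) (wordProd u r)) :
    AvoidsWire v r := fun t ht hr =>
  h _ (validNode_append.mpr (Or.inr ⟨t, ht, rfl⟩)) ((nodeOnWire_append_right u ht r).mpr hr)

lemma AvoidsWire.wordProd_apply {w : List ℕ} {r : ℕ} (h : AvoidsWire w r) :
    wordProd w r = r ∧ ∀ a ∈ w, a ≠ r ∧ a + 1 ≠ r := by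
  induction w using List.reverseRecOn with
  | nil => simp [wordProd_nil]
  | append_singleton w a ih =>
    obtain ⟨hw, hletters⟩ := ih h.of_append_left
    have ha : ¬ NodeOnWire [a] 1 r :=
      AvoidsWire.of_append_right (hw.symm ▸ h) 1 (validNode_singleton.mpr rfl)
    rw [NodeOnWire, wireX_singleton, wireY_singleton, not_or] at ha
    refine ⟨?_, fun b hb => ?_⟩
    · rw [wordProd_append, Equiv.Perm.mul_apply, wordProd_singleton, sTrans_apply,
        if_neg (Ne.symm ha.1), if_neg (Ne.symm ha.2), hw]
    · rcases List.mem_append.mp hb with hb | hb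
      · exact hletters b hb
      · rwa [List.mem_singleton.mp hb]

lemma IsReduced.letter_bounds {n : ℕ} {w : List ℕ} (hw : IsReduced n w) :
    ∀ a ∈ w, 1 ≤ a ∧ a < n + 1 := fun a ha =>
  ⟨(hw.2.1 a ha).1, Nat.lt_succ_of_le (hw.2.1 a ha).2⟩

/-- Starting in column `e` at the top of `d`, a strand crosses every other strand of the diagram
of `d`, which has columns `1, …, n + 1`. -/
def CrossesAll (n : ℕ) (d : List ℕ) (e : ℕ) : Prop :=
  ∀ x ∈ Finset.Icc 1 (n + 1), x ≠ e → ∃ t, ValidNode d t ∧ crossingPair d t = {e, x}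

lemma IsReduced.nodeOnWire_entering {n e : ℕ} {u d v : List ℕ} (hw : IsReduced n (u ++ d ++ v))
    (hd : CrossesAll n d e) {j : ℕ} (hj : ValidNode (u ++ d ++ v) j)
    (hje : NodeOnWire (u ++ d ++ v) j (wordProd u e)) :
    ∃ t, ValidNode d t ∧ j = u.length + t := by
  have hu : ∀ a ∈ u, 1 ≤ a ∧ a < n + 1 := fun a ha => hw.letter_bounds a (by simp [ha])
  obtain ⟨s, hs, hse, hpair⟩ : ∃ s ∈ Finset.Icc 1 (n + 1), s ≠ wordProd u e ∧
      crossingPair (u ++ d ++ v) j = {wordProd u e, s} := by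
    have hmem := wires_mem_Icc hw.letter_bounds hj
    have hne := wireX_ne_wireY (u ++ d ++ v) j
    rcases hje with h | h
    · exact ⟨_, hmem.2, h ▸ hne.symm, h ▸ rfl⟩
    · exact ⟨_, hmem.1, h ▸ hne, h ▸ Finset.pair_comm _ _⟩
  obtain ⟨x, hx, rfl⟩ : ∃ x ∈ Finset.Icc 1 (n + 1), wordProd u x = s := by
    refine ⟨wordProd u.reverse s, wordProd_mem_Icc (fun a ha => hu a (List.mem_reverse.mp ha)) hs,
      ?_⟩
    rw [wordProd_reverse]
    exact (wordProd u).apply_symm_apply s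
  obtain ⟨t, ht, htx⟩ := hd x hx fun h => hse (h ▸ rfl)
  have hut : ValidNode (u ++ d) (u.length + t) := validNode_append.mpr (Or.inr ⟨t, ht, rfl⟩)
  refine ⟨t, ht, hw.injOn_crossingPair hj (validNode_append.mpr (Or.inl hut)) ?_⟩
  rw [hpair, crossingPair_append_middle u ht, htx, Finset.image_insert, Finset.image_singleton]

lemma IsReduced.wordProd_prefix_apply {n e : ℕ} {u d v : List ℕ}
    (hw : IsReduced n (u ++ d ++ v)) (hd : CrossesAll n d e) : wordProd u e = e := by
  have havoid : AvoidsWire u (wordProd u e) := by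
    intro j hj hje
    have hj' : ValidNode (u ++ d) j := validNode_append.mpr (Or.inl hj)
    obtain ⟨t, ht, hjt⟩ := hw.nodeOnWire_entering hd (validNode_append.mpr (Or.inl hj'))
      ((nodeOnWire_append_left hj' v _).mpr ((nodeOnWire_append_left hj d _).mpr hje))
    have := hj.2
    have := ht.1
    omega
  exact (wordProd u).injective havoid.wordProd_apply.1

lemma IsReduced.avoidsWire_suffix {n e f : ℕ} {u d v : List ℕ}
    (hw : IsReduced n (u ++ d ++ v)) (hd : CrossesAll n d e) (hf : wordProd d f = e) :
    AvoidsWire v f := by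
  intro j hj hjf
  obtain ⟨t, ht, hjt⟩ := hw.nodeOnWire_entering hd
    (validNode_append.mpr (Or.inr ⟨j, hj, rfl⟩)) (by
      rw [← hf, ← Equiv.Perm.mul_apply, ← wordProd_append]
      exact (nodeOnWire_append_right (u ++ d) hj f).mpr hjf)
  have := hj.1
  have := ht.2
  rw [List.length_append] at hjt
  omega

lemma IsReduced.nodeOnWire_iff_mem_block {n e : ℕ} {u d v : List ℕ}
    (hw : IsReduced n (u ++ d ++ v)) (hd : CrossesAll n d e)
    (hde : ∀ t, ValidNode d t → NodeOnWire d t e) {j : ℕ} (hj : ValidNode (u ++ d ++ v) j) :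
    NodeOnWire (u ++ d ++ v) j e ↔ ∃ t, ValidNode d t ∧ j = u.length + t := by
  have hfix := hw.wordProd_prefix_apply hd
  constructor
  · intro h
    exact hw.nodeOnWire_entering hd hj (hfix.symm ▸ h)
  · rintro ⟨t, ht, rfl⟩
    have := (nodeOnWire_append_middle u ht v e).mpr (hde t ht)
    rwa [hfix] at this

lemma length_ascWord (n : ℕ) : (ascWord n).length = n := by
  simp [ascWord]

lemma length_descWord (n : ℕ) : (descWord n).length = n := by
  simp [descWord, length_ascWord]

lemma ascWord_succ (n : ℕ) : ascWord (n + 1) = ascWord n ++ [n + 1] := by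
  simp [ascWord, List.range_succ]

lemma descWord_succ (n : ℕ) : descWord (n + 1) = (n + 1) :: descWord n := by
  simp [descWord, ascWord_succ]

lemma wordProd_ascWord (n x : ℕ) :
    wordProd (ascWord n) x = if 1 ≤ x ∧ x ≤ n then x + 1 else if x = n + 1 then 1 else x := by
  induction n generalizing x with
  | zero =>
    rw [show ascWord 0 = [] from rfl, wordProd_nil, Equiv.Perm.one_apply]
    split_ifs <;> omega
  | succ n ih =>
    rw [ascWord_succ, wordProd_append, wordProd_singleton, Equiv.Perm.mul_apply, sTrans_apply, ih]
    split_ifs <;> omega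

lemma wordProd_descWord (n x : ℕ) :
    wordProd (descWord n) x =
      if 2 ≤ x ∧ x ≤ n + 1 then x - 1 else if x = 1 then n + 1 else x := by
  rw [descWord, wordProd_reverse, Equiv.Perm.inv_eq_iff_eq, wordProd_ascWord]
  split_ifs <;> omega

lemma wires_ascWord {n t : ℕ} (ht : ValidNode (ascWord n) t) :
    wireX (ascWord n) t = 1 ∧ wireY (ascWord n) t = t + 1 := by
  induction n with
  | zero => exact absurd (ht.1.trans ht.2) (Nat.not_succ_le_zero 0)
  | succ n ih =>
    rw [ascWord_succ] at ht ⊢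
    obtain ht | ⟨s, hs, rfl⟩ := validNode_append.mp ht
    · rw [wireX_append_left ht, wireY_append_left ht]
      exact ih ht
    · obtain rfl := validNode_singleton.mp hs
      rw [wireX_append_right _ hs, wireY_append_right _ hs, wireX_singleton, wireY_singleton,
        wordProd_ascWord, wordProd_ascWord, length_ascWord]
      exact ⟨by split_ifs <;> omega, by split_ifs <;> omega⟩

lemma wires_descWord {n t : ℕ} (ht : ValidNode (descWord n) t) :
    wireX (descWord n) t = n + 1 - t ∧ wireY (descWord n) t = n + 1 := by
  induction n generalizing t with
  | zero => exact absurd (ht.1.trans ht.2) (Nat.not_succ_le_zero 0)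
  | succ n ih =>
    rw [descWord_succ, ← List.singleton_append] at ht ⊢
    obtain ht | ⟨s, hs, rfl⟩ := validNode_append.mp ht
    · rw [wireX_append_left ht, wireY_append_left ht, validNode_singleton.mp ht]
      exact ⟨rfl, rfl⟩
    · have hbounds := hs
      rw [ValidNode, length_descWord] at hbounds
      rw [wireX_append_right _ hs, wireY_append_right _ hs, (ih hs).1, (ih hs).2,
        wordProd_singleton, sTrans_apply, sTrans_apply, List.length_singleton]
      exact ⟨by split_ifs <;> omega, by split_ifs <;> omega⟩

lemma crossesAll_descWord (n : ℕ) : CrossesAll n (descWord n) (n + 1) := by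
  intro x hx hne
  rw [Finset.mem_Icc] at hx
  have ht : ValidNode (descWord n) (n + 1 - x) := by
    rw [ValidNode, length_descWord]
    omega
  refine ⟨_, ht, ?_⟩
  rw [crossingPair, (wires_descWord ht).1, (wires_descWord ht).2, Finset.pair_comm,
    show n + 1 - (n + 1 - x) = x by omega]

lemma crossesAll_ascWord (n : ℕ) : CrossesAll n (ascWord n) 1 := by
  intro x hx hne
  rw [Finset.mem_Icc] at hx
  have ht : ValidNode (ascWord n) (x - 1) := by
    rw [ValidNode, length_ascWord]
    omega
  refine ⟨_, ht, ?_⟩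
  rw [crossingPair, (wires_ascWord ht).1, (wires_ascWord ht).2, Nat.sub_add_cancel hx.1]

/-! ### Embeddings of wiring diagrams -/

/-- `φ` embeds the nodes of the diagram of `w'` into those of `w`, sending the wire `ℓ_r` to
`ℓ_{r+c}` and preserving the order of the nodes along every wire. Both diagrams are completed by
a virtual node of index `length + 1` below all others, standing for the lower endpoints `L_k`. -/
structure IsDiagramEmbedding (w' w : List ℕ) (c : ℕ) (φ : ℕ → ℕ) : Prop where
  injective : Function.Injective φ
  validNode_iff : ∀ t, ValidNode w (φ t) ↔ ValidNode w' t
  wireX_map : ∀ t, ValidNode w' t → wireX w (φ t) = wireX w' t + c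
  wireY_map : ∀ t, ValidNode w' t → wireY w (φ t) = wireY w' t + c
  map_lower : φ (w'.length + 1) = w.length + 1
  strictMonoOn : ∀ r, StrictMonoOn φ {t | ValidNode w' t ∧ NodeOnWire w' t r}

/-- The diagram of `w'` is obtained from that of `w` by erasing the wire `ℓ_ℓ`, the remaining
nodes being those in the image of `φ`. -/
structure IsWireDeletion (w' w : List ℕ) (c ℓ : ℕ) (φ : ℕ → ℕ) : Prop
    extends IsDiagramEmbedding w' w c φ where
  not_nodeOnWire_iff : ∀ t, ValidNode w t → (¬ NodeOnWire w t ℓ ↔ t ∈ Set.range φ)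

namespace IsDiagramEmbedding

variable {w₁ w₂ w₃ : List ℕ} {c : ℕ} {φ ψ : ℕ → ℕ}

lemma refl (w : List ℕ) : IsDiagramEmbedding w w 0 id where
  injective := Function.injective_id
  validNode_iff _ := Iff.rfl
  wireX_map _ _ := rfl
  wireY_map _ _ := rfl
  map_lower := rfl
  strictMonoOn _ := strictMonoOn_id

lemma nodeOnWire_map (h : IsDiagramEmbedding w₁ w₂ c φ) {t : ℕ} (ht : ValidNode w₁ t) (r : ℕ) :
    NodeOnWire w₂ (φ t) (r + c) ↔ NodeOnWire w₁ t r := by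
  rw [NodeOnWire, h.wireX_map t ht, h.wireY_map t ht, NodeOnWire, Nat.add_right_cancel_iff,
    Nat.add_right_cancel_iff]

lemma otherWire_map (h : IsDiagramEmbedding w₁ w₂ c φ) {t : ℕ} (ht : ValidNode w₁ t) (r : ℕ) :
    otherWire w₂ (φ t) (r + c) = otherWire w₁ t r + c := by
  rw [otherWire, h.wireX_map t ht, h.wireY_map t ht, otherWire]
  split_ifs <;> omega

lemma comp (h : IsDiagramEmbedding w₁ w₂ c φ) (h' : IsDiagramEmbedding w₂ w₃ 0 ψ) :
    IsDiagramEmbedding w₁ w₃ c (ψ ∘ φ) where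
  injective := h'.injective.comp h.injective
  validNode_iff t := (h'.validNode_iff _).trans (h.validNode_iff t)
  wireX_map t ht := (h'.wireX_map _ ((h.validNode_iff t).mpr ht)).trans (h.wireX_map t ht)
  wireY_map t ht := (h'.wireY_map _ ((h.validNode_iff t).mpr ht)).trans (h.wireY_map t ht)
  map_lower := (congrArg ψ h.map_lower).trans h'.map_lower
  strictMonoOn r := (h'.strictMonoOn (r + c)).comp (h.strictMonoOn r) fun t ht =>
    ⟨(h.validNode_iff t).mpr ht.1, (h.nodeOnWire_map ht.1 r).mpr ht.2⟩

end IsDiagramEmbedding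

lemma IsWireDeletion.comp_perm {w₁ w₂ w₃ : List ℕ} {c ℓ : ℕ} {φ : ℕ → ℕ} {ψ : Equiv.Perm ℕ}
    (h : IsWireDeletion w₁ w₂ c ℓ φ) (h' : IsDiagramEmbedding w₂ w₃ 0 ψ) :
    IsWireDeletion w₁ w₃ c ℓ (ψ ∘ φ) where
  toIsDiagramEmbedding := h.toIsDiagramEmbedding.comp h'
  not_nodeOnWire_iff t ht := by
    obtain ⟨s, rfl⟩ := ψ.surjective t
    rw [h'.validNode_iff] at ht
    have hℓ : NodeOnWire w₃ (ψ s) ℓ ↔ NodeOnWire w₂ s ℓ := h'.nodeOnWire_map ht ℓ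
    rw [hℓ, h.not_nodeOnWire_iff s ht, Set.range_comp, ψ.injective.mem_set_image]

/-! ### 2-moves -/

lemma TwoMoveStep.wordProd_eq {w w' : List ℕ} (h : TwoMoveStep w w') :
    wordProd w = wordProd w' := by
  obtain ⟨u, v, a, b, hab, rfl, rfl⟩ := h
  simp only [wordProd_append, wordProd_cons, ← mul_assoc]
  rw [mul_assoc (wordProd u), sTrans_mul_comm hab, ← mul_assoc]

lemma IsReduced.of_twoMoveStep {n : ℕ} {w w' : List ℕ} (hw : IsReduced n w)
    (h : TwoMoveStep w w') : IsReduced n w' := by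
  have hprod := h.wordProd_eq
  obtain ⟨u, v, a, b, -, rfl, rfl⟩ := h
  have hperm : (u ++ a :: b :: v).Perm (u ++ b :: a :: v) := (List.Perm.swap b a v).append_left u
  exact ⟨hperm.length_eq ▸ hw.1, fun x hx => hw.2.1 x (hperm.mem_iff.mpr hx), hprod ▸ hw.2.2⟩

lemma IsReduced.of_twoMoveEquiv {n : ℕ} {w w' : List ℕ} (hw : IsReduced n w)
    (h : TwoMoveEquiv w w') : IsReduced n w' := by
  induction h with
  | refl => exact hw
  | tail _ hstep ih => exact ih.of_twoMoveStep hstep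

lemma wires_twoMove {a b : ℕ} (hab : a + 1 < b ∨ b + 1 < a) :
    (wireX [b, a] 1 = b ∧ wireY [b, a] 1 = b + 1) ∧
      (wireX [b, a] 2 = a ∧ wireY [b, a] 2 = a + 1) := by
  refine ⟨⟨rfl, rfl⟩, ?_⟩
  have h (x) : stateAbove [b, a] 2 x = sTrans b x := by
    rw [stateAbove]
    exact congrArg (· x) (wordProd_singleton b)
  rw [wireX, wireY, h, h, show letterAt [b, a] 2 = a from rfl, sTrans_apply, sTrans_apply]
  exact ⟨by split_ifs <;> omega, by split_ifs <;> omega⟩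

lemma wires_swap (u v : List ℕ) {a b : ℕ} (hab : a + 1 < b ∨ b + 1 < a) {t : ℕ}
    (ht : ValidNode (u ++ [b, a] ++ v) t) :
    wireX (u ++ [a, b] ++ v) (Equiv.swap (u.length + 1) (u.length + 2) t) =
        wireX (u ++ [b, a] ++ v) t ∧
      wireY (u ++ [a, b] ++ v) (Equiv.swap (u.length + 1) (u.length + 2) t) =
        wireY (u ++ [b, a] ++ v) t := by
  obtain ht' | ⟨s, hs, rfl⟩ := validNode_append.mp ht
  · obtain hu | ⟨s, hs, rfl⟩ := validNode_append.mp ht'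
    · have := hu.2
      rw [Equiv.swap_apply_of_ne_of_ne (by omega) (by omega)]
      simp only [List.append_assoc, wireX_append_left hu, wireY_append_left hu, and_self]
    · obtain rfl | rfl : s = 1 ∨ s = 2 := by
        have := hs.1
        have : s ≤ 2 := hs.2
        omega
      · rw [Equiv.swap_apply_left, wireX_append_middle u hs, wireY_append_middle u hs,
          wireX_append_middle u (d := [a, b]) (t := 2) ⟨one_le_two, le_rfl⟩,
          wireY_append_middle u (d := [a, b]) (t := 2) ⟨one_le_two, le_rfl⟩]
        simp only [wires_twoMove hab, wires_twoMove hab.symm, and_self]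
      · rw [Equiv.swap_apply_right, wireX_append_middle u hs, wireY_append_middle u hs,
          wireX_append_middle u (d := [a, b]) (t := 1) ⟨le_rfl, one_le_two⟩,
          wireY_append_middle u (d := [a, b]) (t := 1) ⟨le_rfl, one_le_two⟩]
        simp only [wires_twoMove hab, wires_twoMove hab.symm, and_self]
  · have hprod : wordProd (u ++ [a, b]) = wordProd (u ++ [b, a]) :=
      TwoMoveStep.wordProd_eq ⟨u, [], a, b, hab, rfl, rfl⟩
    have hlen : (u ++ [b, a]).length = (u ++ [a, b]).length := by
      simp only [List.length_append, List.length_cons]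
    have hpos : u.length + 2 < (u ++ [b, a]).length + s := by
      have := hs.1
      simp only [List.length_append, List.length_cons, List.length_nil]
      omega
    rw [Equiv.swap_apply_of_ne_of_ne (by omega) (by omega), wireX_append_right _ hs,
      wireY_append_right _ hs, hlen, wireX_append_right _ hs, wireY_append_right _ hs, hprod]
    exact ⟨rfl, rfl⟩

/- The two exchanged nodes lie on no common wire, so exchanging them keeps the order along every
wire. -/
lemma isDiagramEmbedding_swap (u v : List ℕ) {a b : ℕ} (hab : a + 1 < b ∨ b + 1 < a) :
    IsDiagramEmbedding (u ++ [b, a] ++ v) (u ++ [a, b] ++ v) 0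
      (Equiv.swap (u.length + 1) (u.length + 2)) where
  injective := Equiv.injective _
  validNode_iff t := by
    simp only [ValidNode, List.length_append, List.length_cons, List.length_nil,
      Equiv.swap_apply_def]
    split_ifs <;> omega
  wireX_map t ht := (wires_swap u v hab ht).1
  wireY_map t ht := (wires_swap u v hab ht).2
  map_lower := by
    simp only [List.length_append, List.length_cons, List.length_nil, Equiv.swap_apply_def]
    split_ifs <;> omega
  strictMonoOn r := by
    rintro s ⟨-, hsr⟩ t ⟨-, htr⟩ hst
    obtain h | ⟨rfl, rfl⟩ : Equiv.swap (u.length + 1) (u.length + 2) s <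
        Equiv.swap (u.length + 1) (u.length + 2) t ∨ s = u.length + 1 ∧ t = u.length + 2 := by
      simp only [Equiv.swap_apply_def]
      split_ifs <;> omega
    · exact h
    · obtain ⟨r, rfl⟩ := (wordProd u).surjective r
      have hnode (s) (hs : ValidNode [b, a] s)
          (h : NodeOnWire (u ++ [b, a] ++ v) (u.length + s) (wordProd u r)) :
          NodeOnWire [b, a] s r := (nodeOnWire_append_middle u hs v r).mp h
      have h1 := hnode 1 ⟨le_rfl, one_le_two⟩ hsr
      have h2 := hnode 2 ⟨one_le_two, le_rfl⟩ htr
      rw [NodeOnWire, (wires_twoMove hab).1.1, (wires_twoMove hab).1.2] at h1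
      rw [NodeOnWire, (wires_twoMove hab).2.1, (wires_twoMove hab).2.2] at h2
      omega

lemma TwoMoveEquiv.exists_isDiagramEmbedding {w w' : List ℕ} (h : TwoMoveEquiv w w') :
    ∃ ψ : Equiv.Perm ℕ, IsDiagramEmbedding w' w 0 ψ := by
  induction h with
  | refl => exact ⟨1, .refl w⟩
  | tail _ hstep ih =>
    obtain ⟨ψ, hψ⟩ := ih
    obtain ⟨u, v, a, b, hab, rfl, rfl⟩ := hstep
    have hswap := isDiagramEmbedding_swap u v hab
    simp only [List.append_assoc, List.cons_append, List.nil_append] at hswap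
    exact ⟨ψ * Equiv.swap (u.length + 1) (u.length + 2), hswap.comp hψ⟩

/-! ### Deleting the block `D_n` or `A_n` -/

/-- The inclusion of the node indices into those of a word with `d` further letters inserted
after the first `s` letters. -/
def skipBlock (s d t : ℕ) : ℕ := if t ≤ s then t else t + d

lemma skipBlock_strictMono (s d : ℕ) : StrictMono (skipBlock s d) := by
  intro t t' h
  simp only [skipBlock]
  split_ifs <;> omega

lemma mem_range_skipBlock {s d t : ℕ} :
    t ∈ Set.range (skipBlock s d) ↔ ¬ (s < t ∧ t ≤ s + d) := by
  constructor
  · rintro ⟨t, rfl⟩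
    simp only [skipBlock]
    split_ifs <;> omega
  · intro h
    by_cases hts : t ≤ s
    · exact ⟨t, if_pos hts⟩
    · exact ⟨t - d, by simp only [skipBlock]; split_ifs <;> omega⟩

lemma isWireDeletion_skipBlock {u u' d v v' : List ℕ} {c ℓ : ℕ} (hlu : u'.length = u.length)
    (hlv : v'.length = v.length)
    (hu : ∀ t, ValidNode u t → wireX u t = wireX u' t + c ∧ wireY u t = wireY u' t + c)
    (hv : ∀ t, ValidNode v t → wordProd (u ++ d) (wireX v t) = wordProd u' (wireX v' t) + c ∧
      wordProd (u ++ d) (wireY v t) = wordProd u' (wireY v' t) + c)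
    (hℓ : ∀ t, ValidNode (u ++ d ++ v) t →
      (NodeOnWire (u ++ d ++ v) t ℓ ↔ ∃ s, ValidNode d s ∧ t = u.length + s)) :
    IsWireDeletion (u' ++ v') (u ++ d ++ v) c ℓ (skipBlock u.length d.length) := by
  have hwires : ∀ t, ValidNode (u' ++ v') t →
      wireX (u ++ d ++ v) (skipBlock u.length d.length t) = wireX (u' ++ v') t + c ∧
        wireY (u ++ d ++ v) (skipBlock u.length d.length t) = wireY (u' ++ v') t + c := by
    intro t ht
    obtain ht | ⟨s, hs, rfl⟩ := validNode_append.mp ht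
    · have htu : ValidNode u t := by rwa [ValidNode, ← hlu]
      rw [skipBlock, if_pos htu.2, List.append_assoc, wireX_append_left htu, wireY_append_left htu,
        wireX_append_left ht, wireY_append_left ht]
      exact hu t htu
    · have hsv : ValidNode v s := by rwa [ValidNode, ← hlv]
      have hindex : skipBlock u.length d.length (u'.length + s) = (u ++ d).length + s := by
        have := hs.1
        rw [skipBlock, if_neg (by omega), List.length_append]
        omega
      rw [hindex, wireX_append_right _ hsv, wireY_append_right _ hsv, wireX_append_right _ hs,
        wireY_append_right _ hs]
      exact hv s hsv
  have hmono := skipBlock_strictMono u.length d.length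
  refine ⟨⟨hmono.injective, fun t => ?_, fun t ht => (hwires t ht).1,
    fun t ht => (hwires t ht).2, ?_, fun r => hmono.strictMonoOn _⟩, fun t ht => ?_⟩
  · simp only [ValidNode, List.length_append, skipBlock]
    split_ifs <;> omega
  · simp only [List.length_append, skipBlock]
    split_ifs <;> omega
  · rw [hℓ t ht, mem_range_skipBlock, not_iff_not]
    constructor
    · rintro ⟨s, hs, rfl⟩
      have := hs.1
      have := hs.2
      omega
    · intro h
      exact ⟨t - u.length, ⟨by omega, by omega⟩, by omega⟩

lemma IsReduced.isWireDeletion_descWord {n : ℕ} {u v : List ℕ}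
    (hw : IsReduced n (u ++ descWord n ++ v)) :
    IsWireDeletion (u ++ v.map (· - 1)) (u ++ descWord n ++ v) 0 (n + 1)
      (skipBlock u.length (descWord n).length) := by
  have havoid : AvoidsWire v 1 := hw.avoidsWire_suffix (crossesAll_descWord n) (by
    rw [wordProd_descWord]
    split_ifs <;> omega)
  have hv : ∀ a ∈ v, 2 ≤ a ∧ a < n + 1 := fun a ha => by
    have := hw.letter_bounds a (List.mem_append_right _ ha)
    have := (havoid.wordProd_apply.2 a ha).1
    omega
  have hv1 : ∀ a ∈ v, 1 ≤ a := fun a ha => one_le_two.trans (hv a ha).1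
  have hdesc (y) (hy : y + 1 ∈ Finset.Icc 2 (n + 1)) : wordProd (descWord n) (y + 1) = y := by
    rw [Finset.mem_Icc] at hy
    rw [wordProd_descWord, if_pos hy, Nat.add_sub_cancel]
  refine isWireDeletion_skipBlock rfl (List.length_map _) (fun t _ => ⟨rfl, rfl⟩) (fun t ht => ?_)
    fun t ht => hw.nodeOnWire_iff_mem_block (crossesAll_descWord n)
      (fun s hs => Or.inr (wires_descWord hs).2) ht
  have hbounds := wires_mem_Icc hv ht
  rw [wireX_map_pred hv1 ht, wireY_map_pred hv1 ht] at hbounds ⊢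
  rw [wordProd_append, Equiv.Perm.mul_apply, Equiv.Perm.mul_apply, hdesc _ hbounds.1,
    hdesc _ hbounds.2]
  exact ⟨rfl, rfl⟩

lemma IsReduced.isWireDeletion_ascWord {n : ℕ} {u v : List ℕ}
    (hw : IsReduced n (u ++ ascWord n ++ v)) :
    IsWireDeletion (u.map (· - 1) ++ v) (u ++ ascWord n ++ v) 1 1
      (skipBlock u.length (ascWord n).length) := by
  have havoid : AvoidsWire v (n + 1) := hw.avoidsWire_suffix (crossesAll_ascWord n) (by
    rw [wordProd_ascWord]
    split_ifs <;> omega)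
  have hv : ∀ a ∈ v, 1 ≤ a ∧ a < n := fun a ha => by
    have := hw.letter_bounds a (List.mem_append_right _ ha)
    have := (havoid.wordProd_apply.2 a ha).2
    omega
  have hu : ∀ a ∈ u, 1 ≤ a := fun a ha =>
    (hw.letter_bounds a (List.mem_append_left _ (List.mem_append_left _ ha))).1
  have hasc (y) (hy : y ∈ Finset.Icc 1 n) : wordProd (ascWord n) y = y + 1 := by
    rw [Finset.mem_Icc] at hy
    rw [wordProd_ascWord, if_pos hy]
  refine isWireDeletion_skipBlock (List.length_map _) rfl
    (fun t ht => ⟨wireX_map_pred hu ht, wireY_map_pred hu ht⟩) (fun t ht => ?_)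
    fun t ht => hw.nodeOnWire_iff_mem_block (crossesAll_ascWord n)
      (fun s hs => Or.inl (wires_ascWord hs).1) ht
  have hbounds := wires_mem_Icc hv ht
  rw [wordProd_append, Equiv.Perm.mul_apply, Equiv.Perm.mul_apply, hasc _ hbounds.1,
    hasc _ hbounds.2, wordProd_apply_succ hu, wordProd_apply_succ hu]
  exact ⟨rfl, rfl⟩

lemma IsContractionD.exists_isWireDeletion {n : ℕ} {w w' : List ℕ} (h : IsContractionD n w w')
    (hw : IsReduced n w) : ∃ φ, IsWireDeletion w' w 0 (n + 1) φ := by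
  obtain ⟨u, v, hequiv, rfl⟩ := h
  obtain ⟨ψ, hψ⟩ := hequiv.exists_isDiagramEmbedding
  exact ⟨_, (hw.of_twoMoveEquiv hequiv).isWireDeletion_descWord.comp_perm hψ⟩

lemma IsContractionA.exists_isWireDeletion {n : ℕ} {w w' : List ℕ} (h : IsContractionA n w w')
    (hw : IsReduced n w) : ∃ φ, IsWireDeletion w' w 1 1 φ := by
  obtain ⟨u, v, hequiv, rfl⟩ := h
  obtain ⟨ψ, hψ⟩ := hequiv.exists_isDiagramEmbedding
  exact ⟨_, (hw.of_twoMoveEquiv hequiv).isWireDeletion_ascWord.comp_perm hψ⟩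

/-! ### Rigorous paths -/

lemma mem_segList {w : List ℕ} {r a b j : ℕ} :
    j ∈ segList w r a b ↔ ValidNode w j ∧ NodeOnWire w j r ∧ min a b < j ∧ j < max a b := by
  simp only [segList, nodesOn, List.mem_filter, List.mem_map, List.mem_range, decide_eq_true_eq,
    ValidNode]
  constructor
  · rintro ⟨⟨⟨i, hi, rfl⟩, hr⟩, hab⟩
    exact ⟨by omega, hr, hab⟩
  · rintro ⟨hj, hr, hab⟩
    exact ⟨⟨⟨j - 1, by omega, by omega⟩, hr⟩, hab⟩

lemma nodup_segList (w : List ℕ) (r a b : ℕ) : (segList w r a b).Nodup :=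
  ((List.nodup_range.map (add_left_injective 1)).filter _).filter _

lemma segList_comm (w : List ℕ) (r a b : ℕ) : segList w r a b = segList w r b a := by
  rw [segList, min_comm, max_comm, segList]

lemma tailList_eq_segList (w : List ℕ) (r a : ℕ) :
    tailList w r a = segList w r a (w.length + 1) := by
  refine List.filter_congr fun j hj => decide_eq_decide.mpr ?_
  have hjN : j ≤ w.length := by
    simp only [nodesOn, List.mem_filter, List.mem_map, List.mem_range] at hj
    omega
  omega

/-- Along `ℓ_r`, oriented as in `G(i, k)`, the node `t_a` comes before `t_b`. -/
def Precedes (k r a b : ℕ) : Prop := if r ≤ k then b < a else a < b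

lemma mem_segList_iff_precedes {w : List ℕ} {k r a b j : ℕ} (hab : Precedes k r a b) :
    j ∈ segList w r a b ↔
      ValidNode w j ∧ NodeOnWire w j r ∧ Precedes k r a j ∧ Precedes k r j b := by
  rw [mem_segList]
  refine and_congr_right' (and_congr_right' ?_)
  unfold Precedes at *
  split_ifs at * <;> omega

lemma Precedes.trans {k r a b c : ℕ} (hab : Precedes k r a b) (hbc : Precedes k r b c) :
    Precedes k r a c := by
  unfold Precedes at *
  split_ifs at * <;> omega

lemma precedes_trichotomy (k r a b : ℕ) : Precedes k r a b ∨ a = b ∨ Precedes k r b a := by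
  unfold Precedes
  split_ifs <;> omega

/-- `t_a` is a node of `ℓ_r`, or the virtual node `t_{N+1}` at the lower end of `ℓ_r`. -/
def IsWirePoint (w : List ℕ) (r a : ℕ) : Prop :=
  ValidNode w a ∧ NodeOnWire w a r ∨ a = w.length + 1

lemma isWirePoint_otherWire {w : List ℕ} {m : ℕ} (hm : ValidNode w m) (r : ℕ) :
    IsWirePoint w (otherWire w m r) m :=
  Or.inl ⟨hm, nodeOnWire_otherWire w m r⟩

lemma travelOK_nil {w : List ℕ} {k r a : ℕ} :
    TravelOK w k r a [] ↔
      r = k + 1 ∧ ∀ j ∈ segList w r a (w.length + 1), ¬ Forbidden w k j r := by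
  rw [← tailList_eq_segList, TravelOK]

lemma travelOK_cons {w : List ℕ} {k r a m : ℕ} {ms : List ℕ} :
    TravelOK w k r a (m :: ms) ↔
      ValidNode w m ∧ NodeOnWire w m r ∧ Precedes k r a m ∧
        (∀ j ∈ segList w r a m, ¬ Forbidden w k j r) ∧ TravelOK w k (otherWire w m r) m ms :=
  Iff.rfl

lemma visitTail_nil (w : List ℕ) (r a : ℕ) :
    visitTail w r a [] = segList w r a (w.length + 1) :=
  tailList_eq_segList w r a

lemma visitTail_cons (w : List ℕ) (r a m : ℕ) (ms : List ℕ) :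
    visitTail w r a (m :: ms) = segList w r a m ++ m :: visitTail w (otherWire w m r) m ms :=
  rfl

/- Starting the travel at the virtual node `t_{N+1}` absorbs the initial segment from `L_k`. -/
lemma isGPPath_iff {n k : ℕ} {w ms : List ℕ} :
    IsGPPath n w k ms ↔ 1 ≤ k ∧ k ≤ n ∧ TravelOK w k k (w.length + 1) ms ∧
      (visitTail w k (w.length + 1) ms).Nodup := by
  cases ms with
  | nil => simp [IsGPPath, travelOK_nil]
  | cons m ms =>
    rw [IsGPPath.eq_def]
    dsimp only
    rw [visitList, visitTail_cons, tailList_eq_segList, segList_comm w k m, travelOK_cons]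
    have hlower : ValidNode w m → Precedes k k (w.length + 1) m := fun hm => by
      rw [Precedes, if_pos le_rfl]
      exact Nat.lt_succ_of_le hm.2
    tauto

section Travel

variable {w : List ℕ} {k r a ℓ : ℕ} {ms : List ℕ}

lemma TravelOK.validNode_of_mem (h : TravelOK w k r a ms) : ∀ m ∈ ms, ValidNode w m := by
  induction ms generalizing r a with
  | nil => simp
  | cons m ms ih =>
    obtain ⟨hm, -, -, -, hms⟩ := travelOK_cons.mp h
    exact List.forall_mem_cons.mpr ⟨hm, ih hms⟩

lemma subset_visitTail (w : List ℕ) (r a : ℕ) (ms : List ℕ) : ms ⊆ visitTail w r a ms := by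
  induction ms generalizing r a with
  | nil => exact List.nil_subset _
  | cons m ms ih =>
    exact List.Subset.trans (List.cons_subset_cons m (ih _ m)) (List.subset_append_right _ _)

lemma TravelOK.validNode_of_mem_visitTail (h : TravelOK w k r a ms) {x : ℕ}
    (hx : x ∈ visitTail w r a ms) : ValidNode w x := by
  induction ms generalizing r a with
  | nil =>
    rw [visitTail_nil] at hx
    exact (mem_segList.mp hx).1
  | cons m ms ih =>
    obtain ⟨hm, -, -, -, hms⟩ := travelOK_cons.mp h
    rw [visitTail_cons] at hx
    rcases List.mem_append.mp hx with hx | hx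
    · exact (mem_segList.mp hx).1
    · rcases List.mem_cons.mp hx with rfl | hx
      · exact hm
      · exact ih hms hx

lemma TravelOK.succ_ne_wire (h : TravelOK w k r a ms) (hr : r ≠ ℓ)
    (hms : ∀ m ∈ ms, ¬ NodeOnWire w m ℓ) : k + 1 ≠ ℓ := by
  induction ms generalizing r a with
  | nil => exact (travelOK_nil.mp h).1 ▸ hr
  | cons m ms ih =>
    obtain ⟨-, -, -, -, htravel⟩ := travelOK_cons.mp h
    obtain ⟨hm, hms⟩ := List.forall_mem_cons.mp hms
    exact ih htravel (fun heq => hm (heq ▸ nodeOnWire_otherWire w m r)) hms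

lemma TravelOK.exists_strand (h : TravelOK w k r a ms) (ha : ValidNode w a)
    (har : NodeOnWire w a r) {x : ℕ} (hx : x ∈ visitTail w r a ms) (hxms : x ∉ ms) :
    ∃ s, ∃ b ∈ a :: ms, NodeOnWire w b s ∧ NodeOnWire w x s ∧ Precedes k s b x ∧
      ∀ y, ValidNode w y → NodeOnWire w y s → Precedes k s b y → Precedes k s y x →
        y ∈ visitTail w r a ms := by
  induction ms generalizing r a with
  | nil =>
    have hend : Precedes k r a (w.length + 1) := by
      rw [Precedes, if_neg (by have := (travelOK_nil.mp h).1; omega)]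
      exact Nat.lt_succ_of_le ha.2
    rw [visitTail_nil] at hx ⊢
    obtain ⟨-, hxr, hax, hxend⟩ := (mem_segList_iff_precedes hend).mp hx
    exact ⟨r, a, List.mem_cons_self, har, hxr, hax, fun y hy hyr hay hyx =>
      (mem_segList_iff_precedes hend).mpr ⟨hy, hyr, hay, hyx.trans hxend⟩⟩
  | cons m ms ih =>
    obtain ⟨hm, -, ham, -, htravel⟩ := travelOK_cons.mp h
    rw [visitTail_cons] at hx ⊢
    rw [List.mem_cons, not_or] at hxms
    rcases List.mem_append.mp hx with hx | hx
    · obtain ⟨-, hxr, hax, hxm⟩ := (mem_segList_iff_precedes ham).mp hx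
      exact ⟨r, a, List.mem_cons_self, har, hxr, hax, fun y hy hyr hay hyx =>
        List.mem_append_left _ ((mem_segList_iff_precedes ham).mpr ⟨hy, hyr, hay, hyx.trans hxm⟩)⟩
    · have hx' := (List.mem_cons.mp hx).resolve_left hxms.1
      obtain ⟨s, b, hb, hbs, hxs, hbx, hbetween⟩ :=
        ih htravel hm (nodeOnWire_otherWire w m r) hx' hxms.2
      exact ⟨s, b, List.mem_cons_of_mem a hb, hbs, hxs, hbx, fun y hy hys hby hyx =>
        List.mem_append_right _ (List.mem_cons_of_mem m (hbetween y hy hys hby hyx))⟩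

/- A node on `ℓ` visited twice is passed twice along the same other wire, so the start of the
later-starting of the two strands, which is off `ℓ`, is visited twice too. -/
lemma TravelOK.disjoint_segList {m : ℕ} (h : TravelOK w k r a (m :: ms)) (hr : r ≠ ℓ)
    (ha : IsWirePoint w r a) (hms : ∀ t ∈ m :: ms, ¬ NodeOnWire w t ℓ)
    (hav : a ∉ visitTail w r a (m :: ms))
    (hoff : ∀ t ∈ segList w r a m, ¬ NodeOnWire w t ℓ →
      t ∉ m :: visitTail w (otherWire w m r) m ms) :
    List.Disjoint (segList w r a m) (m :: visitTail w (otherWire w m r) m ms) := by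
  intro x hx hx'
  obtain ⟨hm, -, ham, -, htravel⟩ := travelOK_cons.mp h
  obtain ⟨-, hxr, hax, hxm⟩ := (mem_segList_iff_precedes ham).mp hx
  have hxℓ : NodeOnWire w x ℓ := by_contra fun hxℓ => hoff x hx hxℓ hx'
  have hxm_ne : x ≠ m := fun heq => hms m List.mem_cons_self (heq ▸ hxℓ)
  obtain ⟨s, b, hb, hbs, hxs, hbx, hbetween⟩ := htravel.exists_strand hm
    (nodeOnWire_otherWire w m r) ((List.mem_cons.mp hx').resolve_left hxm_ne)
    fun hxms => hms x (List.mem_cons_of_mem m hxms) hxℓ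
  have hsℓ : s ≠ ℓ := fun heq => hms b hb (heq ▸ hbs)
  obtain rfl : s = r := eq_of_nodeOnWire hxs hxr hxℓ hsℓ hr
  have hbv : b ∈ m :: visitTail w (otherWire w m s) m ms :=
    List.cons_subset_cons m (subset_visitTail w _ m ms) hb
  have hbN : b ≤ w.length := (h.validNode_of_mem b hb).2
  rcases precedes_trichotomy k s a b with hab | rfl | hba
  · exact hoff b ((mem_segList_iff_precedes ham).mpr
      ⟨h.validNode_of_mem b hb, hbs, hab, hbx.trans hxm⟩) (hms b hb) hbv
  · exact hav (List.mem_append_right _ hbv)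
  · have haN : a ≠ w.length + 1 := by
      have := (mem_segList.mp hx).1.2
      unfold Precedes at hba hax
      split_ifs at hba hax <;> omega
    obtain ⟨haw, has⟩ := ha.resolve_right haN
    exact hav (List.mem_append_right _ (List.mem_cons_of_mem m (hbetween a haw has hba hax)))

lemma TravelOK.nodup_visitTail (h : TravelOK w k r a ms) (hr : r ≠ ℓ)
    (ha : IsWirePoint w r a) (hms : ∀ t ∈ ms, ¬ NodeOnWire w t ℓ)
    (hav : a ∉ visitTail w r a ms)
    (hoff : ((visitTail w r a ms).filter (¬ NodeOnWire w · ℓ)).Nodup) :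
    (visitTail w r a ms).Nodup := by
  induction ms generalizing r a with
  | nil =>
    rw [visitTail_nil]
    exact nodup_segList w r a _
  | cons m ms ih =>
    obtain ⟨hm, -, -, -, htravel⟩ := travelOK_cons.mp h
    obtain ⟨hmℓ, hmsℓ⟩ := List.forall_mem_cons.mp hms
    rw [visitTail_cons, List.filter_append, List.nodup_append'] at hoff
    obtain ⟨-, hoff_tail, hoff_disjoint⟩ := hoff
    rw [List.filter_cons_of_pos (by simpa using hmℓ), List.nodup_cons] at hoff_tail
    have hmv : m ∉ visitTail w (otherWire w m r) m ms := fun hmem =>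
      hoff_tail.1 (List.mem_filter.mpr ⟨hmem, by simpa using hmℓ⟩)
    have htail := ih htravel (fun heq => hmℓ (heq ▸ nodeOnWire_otherWire w m r))
      (isWirePoint_otherWire hm r) hmsℓ hmv hoff_tail.2
    rw [visitTail_cons, List.nodup_append']
    refine ⟨nodup_segList w r a m, List.nodup_cons.mpr ⟨hmv, htail⟩,
      h.disjoint_segList hr ha hms hav fun t ht htℓ ht' => ?_⟩
    exact hoff_disjoint (List.mem_filter.mpr ⟨ht, by simpa using htℓ⟩)
      (List.mem_filter.mpr ⟨ht', by simpa using htℓ⟩)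

end Travel

/-! ### Paths under the deletion of a wire -/

namespace IsDiagramEmbedding

variable {w' w : List ℕ} {c k r a b x : ℕ} {φ : ℕ → ℕ}

lemma lt_iff_lt (h : IsDiagramEmbedding w' w c φ) (ha : IsWirePoint w' r a)
    (hb : IsWirePoint w' r b) : φ a < φ b ↔ a < b := by
  have hmono : StrictMonoOn φ {t | IsWirePoint w' r t} := by
    rintro s hs t ht hst
    have hlast : s ≠ w'.length + 1 := by
      rintro rfl
      rcases ht with ht | ht
      · have := ht.1.2
        omega
      · omega
    have hs := hs.resolve_right hlast
    rcases ht with ht | rfl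
    · exact h.strictMonoOn r hs ht hst
    · rw [h.map_lower]
      exact Nat.lt_succ_of_le ((h.validNode_iff s).mpr hs.1).2
  exact hmono.lt_iff_lt ha hb

lemma map_mem_segList (h : IsDiagramEmbedding w' w c φ) (ha : IsWirePoint w' r a)
    (hb : IsWirePoint w' r b) :
    φ x ∈ segList w (r + c) (φ a) (φ b) ↔ x ∈ segList w' r a b := by
  rw [mem_segList, mem_segList, h.validNode_iff]
  refine and_congr_right fun hx => ?_
  rw [h.nodeOnWire_map hx]
  refine and_congr_right fun hxr => ?_
  have hpoint : IsWirePoint w' r x := Or.inl ⟨hx, hxr⟩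
  rw [min_lt_iff, min_lt_iff, lt_max_iff, lt_max_iff, h.lt_iff_lt ha hpoint,
    h.lt_iff_lt hb hpoint, h.lt_iff_lt hpoint ha, h.lt_iff_lt hpoint hb]

lemma precedes_map (h : IsDiagramEmbedding w' w c φ) (ha : IsWirePoint w' r a)
    (hb : IsWirePoint w' r b) : Precedes (k + c) (r + c) (φ a) (φ b) ↔ Precedes k r a b := by
  simp only [Precedes, Nat.add_le_add_iff_right, h.lt_iff_lt ha hb, h.lt_iff_lt hb ha]

lemma forbidden_map (h : IsDiagramEmbedding w' w c φ) (hx : ValidNode w' x) :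
    Forbidden w (k + c) (φ x) (r + c) ↔ Forbidden w' k x r := by
  simp only [Forbidden, h.otherWire_map hx, Nat.add_le_add_iff_right, Nat.add_lt_add_iff_right]

end IsDiagramEmbedding

/-- In `G(i, k)`, every other wire may pass straight through its crossings with `ℓ_ℓ`. -/
def IsFreelyCrossed (w : List ℕ) (k ℓ : ℕ) : Prop :=
  ∀ t r, ValidNode w t → NodeOnWire w t r → NodeOnWire w t ℓ → r ≠ ℓ → ¬ Forbidden w k t r

namespace IsWireDeletion

variable {w' w : List ℕ} {c ℓ k r a b t : ℕ} {φ : ℕ → ℕ} {ms : List ℕ}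

lemma not_nodeOnWire (h : IsWireDeletion w' w c ℓ φ) (ht : ValidNode w' t) :
    ¬ NodeOnWire w (φ t) ℓ :=
  (h.not_nodeOnWire_iff _ ((h.validNode_iff t).mpr ht)).mpr ⟨t, rfl⟩

lemma otherWire_ne (h : IsWireDeletion w' w c ℓ φ) (ht : ValidNode w' t) (r : ℕ) :
    otherWire w' t r + c ≠ ℓ := fun heq =>
  h.not_nodeOnWire ht <| heq ▸ (h.nodeOnWire_map ht _).mpr (nodeOnWire_otherWire w' t r)

lemma forall_segList_not_forbidden_iff (h : IsWireDeletion w' w c ℓ φ)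
    (hfree : IsFreelyCrossed w (k + c) ℓ) (hr : r + c ≠ ℓ) (ha : IsWirePoint w' r a)
    (hb : IsWirePoint w' r b) :
    (∀ j ∈ segList w (r + c) (φ a) (φ b), ¬ Forbidden w (k + c) j (r + c)) ↔
      ∀ j ∈ segList w' r a b, ¬ Forbidden w' k j r := by
  constructor
  · intro hall j hj
    rw [← h.forbidden_map (mem_segList.mp hj).1]
    exact hall _ ((h.map_mem_segList ha hb).mpr hj)
  · intro hall j hj
    obtain ⟨hjw, hjr, -⟩ := mem_segList.mp hj
    by_cases hjℓ : NodeOnWire w j ℓ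
    · exact hfree j _ hjw hjr hjℓ hr
    · obtain ⟨j, rfl⟩ := (h.not_nodeOnWire_iff j hjw).mp hjℓ
      rw [h.forbidden_map ((h.validNode_iff j).mp hjw)]
      exact hall j ((h.map_mem_segList ha hb).mp hj)

lemma travelOK_map_iff (h : IsWireDeletion w' w c ℓ φ) (hfree : IsFreelyCrossed w (k + c) ℓ)
    (hr : r + c ≠ ℓ) (ha : IsWirePoint w' r a) :
    TravelOK w (k + c) (r + c) (φ a) (ms.map φ) ↔ TravelOK w' k r a ms := by
  induction ms generalizing r a with
  | nil =>
    rw [List.map_nil, travelOK_nil, travelOK_nil, ← h.map_lower,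
      h.forall_segList_not_forbidden_iff hfree hr ha (Or.inr rfl)]
    exact and_congr_left' (by omega)
  | cons m ms ih =>
    rw [List.map_cons, travelOK_cons, travelOK_cons, h.validNode_iff]
    refine and_congr_right fun hm => ?_
    rw [h.nodeOnWire_map hm, h.otherWire_map hm, ih (h.otherWire_ne hm r)
      (isWirePoint_otherWire hm r)]
    refine and_congr_right fun hmr => ?_
    have hmpoint : IsWirePoint w' r m := Or.inl ⟨hm, hmr⟩
    rw [h.precedes_map ha hmpoint, h.forall_segList_not_forbidden_iff hfree hr ha hmpoint]

lemma filter_segList_perm (h : IsWireDeletion w' w c ℓ φ) (ha : IsWirePoint w' r a)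
    (hb : IsWirePoint w' r b) :
    ((segList w (r + c) (φ a) (φ b)).filter (¬ NodeOnWire w · ℓ)).Perm
      ((segList w' r a b).map φ) := by
  refine (List.perm_ext_iff_of_nodup ((nodup_segList _ _ _ _).filter _)
    ((nodup_segList _ _ _ _).map h.injective)).mpr fun j => ?_
  rw [List.mem_filter, List.mem_map, decide_eq_true_eq]
  constructor
  · rintro ⟨hj, hjℓ⟩
    obtain ⟨j, rfl⟩ := (h.not_nodeOnWire_iff j (mem_segList.mp hj).1).mp hjℓ
    exact ⟨j, (h.map_mem_segList ha hb).mp hj, rfl⟩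
  · rintro ⟨j, hj, rfl⟩
    exact ⟨(h.map_mem_segList ha hb).mpr hj, h.not_nodeOnWire (mem_segList.mp hj).1⟩

lemma filter_visitTail_perm (h : IsWireDeletion w' w c ℓ φ) (htravel : TravelOK w' k r a ms)
    (ha : IsWirePoint w' r a) :
    ((visitTail w (r + c) (φ a) (ms.map φ)).filter (¬ NodeOnWire w · ℓ)).Perm
      ((visitTail w' r a ms).map φ) := by
  induction ms generalizing r a with
  | nil =>
    rw [List.map_nil, visitTail_nil, visitTail_nil, ← h.map_lower]
    exact h.filter_segList_perm ha (Or.inr rfl)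
  | cons m ms ih =>
    obtain ⟨hm, hmr, -, -, htravel⟩ := travelOK_cons.mp htravel
    rw [List.map_cons, visitTail_cons, visitTail_cons, h.otherWire_map hm, List.filter_append,
      List.filter_cons_of_pos (by simpa using h.not_nodeOnWire hm), List.map_append, List.map_cons]
    exact (h.filter_segList_perm ha (Or.inl ⟨hm, hmr⟩)).append
      ((ih htravel (isWirePoint_otherWire hm r)).cons (φ m))

lemma nodup_visitTail_map_iff (h : IsWireDeletion w' w c ℓ φ)
    (hfree : IsFreelyCrossed w (k + c) ℓ) (hk : k + c ≠ ℓ)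
    (htravel : TravelOK w' k k (w'.length + 1) ms) :
    (visitTail w (k + c) (w.length + 1) (ms.map φ)).Nodup ↔
      (visitTail w' k (w'.length + 1) ms).Nodup := by
  have hlower : IsWirePoint w' k (w'.length + 1) := Or.inr rfl
  have hperm := h.filter_visitTail_perm htravel hlower
  have htravel_map := (h.travelOK_map_iff hfree hk hlower).mpr htravel
  rw [h.map_lower] at hperm htravel_map
  rw [← List.nodup_map_iff h.injective (l := visitTail w' _ _ _), ← hperm.nodup_iff]
  refine ⟨fun hnodup => hnodup.filter _, htravel_map.nodup_visitTail hk (Or.inr rfl) ?_ ?_⟩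
  · exact List.forall_mem_map.mpr fun m hm => h.not_nodeOnWire (htravel.validNode_of_mem m hm)
  · intro hmem
    have := (htravel_map.validNode_of_mem_visitTail hmem).2
    omega

lemma isGPPath_map_iff {n' n : ℕ} (h : IsWireDeletion w' w c ℓ φ)
    (hfree : IsFreelyCrossed w (k + c) ℓ) (hk : k + c ≠ ℓ)
    (hbounds : 1 ≤ k + c ∧ k + c ≤ n ↔ 1 ≤ k ∧ k ≤ n') :
    IsGPPath n w (k + c) (ms.map φ) ↔ IsGPPath n' w' k ms := by
  rw [isGPPath_iff, isGPPath_iff, ← and_assoc, hbounds, and_assoc, ← h.map_lower,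
    h.travelOK_map_iff hfree hk (Or.inr rfl), h.map_lower]
  exact and_congr_right' <| and_congr_right' <| and_congr_right fun htravel =>
    h.nodup_visitTail_map_iff hfree hk htravel

end IsWireDeletion

/-- `ℓ_ℓ` is `ℓ_{n+1}` or `ℓ_1`, and `c` is the shift of the wire labels caused by erasing it. -/
def IsOuterWire (n c ℓ : ℕ) : Prop := ℓ = n + 1 ∧ c = 0 ∨ ℓ = 1 ∧ c = 1

/- In `G(i, k)` the wire `ℓ_1` points upward and `ℓ_{n+1}` downward, and forbidden fragments go
along the smaller of two upward wires or the larger of two downward ones. -/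
lemma IsOuterWire.isFreelyCrossed {n c ℓ k : ℕ} {w : List ℕ} (hℓ : IsOuterWire n c ℓ)
    (hw : ∀ a ∈ w, 1 ≤ a ∧ a < n + 1) (hk : 1 ≤ k) (hkn : k ≤ n) : IsFreelyCrossed w k ℓ := by
  intro t r ht hr htℓ hrℓ
  have hbounds := wires_mem_Icc hw ht
  rw [Finset.mem_Icc, Finset.mem_Icc] at hbounds
  rw [Forbidden, otherWire_eq hr htℓ hrℓ]
  unfold NodeOnWire at hr
  unfold IsOuterWire at hℓ
  omega

/-- The map of paths induced by an embedding `φ` of nodes shifting the wire labels by `c`. -/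
def mapPath (c : ℕ) (φ : ℕ → ℕ) (p : ℕ × List ℕ) : ℕ × List ℕ := (p.1 + c, p.2.map φ)

lemma mapPath_injective {φ : ℕ → ℕ} (hφ : Function.Injective φ) (c : ℕ) :
    Function.Injective (mapPath c φ) :=
  (add_left_injective c).prodMap hφ.list_map

lemma IsGPPath.ne_of_switches_off {n k ℓ : ℕ} {w ms : List ℕ} (h : IsGPPath n w k ms)
    (hms : ∀ m ∈ ms, ¬ NodeOnWire w m ℓ) : k ≠ ℓ ∧ k + 1 ≠ ℓ := by
  obtain ⟨-, -, htravel, -⟩ := isGPPath_iff.mp h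
  have hk : k ≠ ℓ := by
    cases ms with
    | nil => exact absurd (travelOK_nil.mp htravel).1 k.succ_ne_self.symm
    | cons m ms => exact fun heq => hms m List.mem_cons_self (heq ▸ (travelOK_cons.mp htravel).2.1)
  exact ⟨hk, htravel.succ_ne_wire hk hms⟩

theorem IsWireDeletion.image_mapPath_GP {n c ℓ : ℕ} {w' w : List ℕ} {φ : ℕ → ℕ}
    (h : IsWireDeletion w' w c ℓ φ) (hℓ : IsOuterWire n c ℓ)
    (hw : ∀ a ∈ w, 1 ≤ a ∧ a < n + 1) :
    mapPath c φ '' GP (n - 1) w' = {q | q ∈ GP n w ∧ ∀ t ∈ q.2, ¬ NodeOnWire w t ℓ} := by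
  have hiff {k ms} (hk : 1 ≤ k ∧ k ≤ n - 1) :
      IsGPPath n w (k + c) (ms.map φ) ↔ IsGPPath (n - 1) w' k ms := by
    have hshift := hℓ
    unfold IsOuterWire at hshift
    exact h.isGPPath_map_iff (hℓ.isFreelyCrossed hw (by omega) (by omega)) (by omega) (by omega)
  ext ⟨k, ms⟩
  constructor
  · rintro ⟨⟨k', ms'⟩, hp, heq⟩
    obtain ⟨rfl, rfl⟩ := Prod.mk.inj heq
    obtain ⟨hk, hkn, htravel, -⟩ := isGPPath_iff.mp hp
    exact ⟨(hiff ⟨hk, hkn⟩).mpr hp, List.forall_mem_map.mpr fun m hm =>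
      h.not_nodeOnWire (htravel.validNode_of_mem m hm)⟩
  · rintro ⟨hq, hms⟩
    obtain ⟨hk, hkn, htravel, -⟩ := isGPPath_iff.mp hq
    obtain ⟨hkℓ, hkℓ'⟩ := IsGPPath.ne_of_switches_off hq hms
    obtain ⟨k, rfl, hk'⟩ : ∃ k', k = k' + c ∧ 1 ≤ k' ∧ k' ≤ n - 1 := by
      refine ⟨k - c, ?_⟩
      unfold IsOuterWire at hℓ
      dsimp only at *
      omega
    obtain ⟨ms, rfl⟩ : ms ∈ Set.range (List.map φ) := by
      rw [Set.range_list_map]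
      exact fun m hm => (h.not_nodeOnWire_iff m (htravel.validNode_of_mem m hm)).mp (hms m hm)
    exact ⟨(k, ms), (hiff hk').mp hq, rfl⟩

lemma IsWireDeletion.exists_injective_range_eq {n c ℓ : ℕ} {w' w : List ℕ} {φ : ℕ → ℕ}
    (h : IsWireDeletion w' w c ℓ φ) (hℓ : IsOuterWire n c ℓ)
    (hw : ∀ a ∈ w, 1 ≤ a ∧ a < n + 1) :
    ∃ Ψ : {p // p ∈ GP (n - 1) w'} → {q // q ∈ GP n w}, Function.Injective Ψ ∧
      Set.range (fun p => (Ψ p).1) = {q | q ∈ GP n w ∧ ∀ t ∈ q.2, ¬ NodeOnWire w t ℓ} := by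
  have himage := h.image_mapPath_GP hℓ hw
  have hmaps : Set.MapsTo (mapPath c φ) (GP (n - 1) w') (GP n w) := fun p hp =>
    (himage.subset (Set.mem_image_of_mem _ hp)).1
  refine ⟨hmaps.restrict, hmaps.restrict_inj.mpr (mapPath_injective h.injective c).injOn, ?_⟩
  rw [← himage, Set.image_eq_range]
  rfl

/-- Corollary: old paths under contraction.
For `i ∈ Σ_{n+1}` and `• ∈ {A, D}` there is a canonical injection
`GP(C_•(i)) ↪ GP(i)` whose image is exactly the set of rigorous paths of `G(i)`
none of whose switching nodes lies on the wire `ℓ_•`, with `ℓ_D = ℓ_{n+1}` and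
`ℓ_A = ℓ_1`. -/
theorem statement9 (n : ℕ) (hn : 1 ≤ n) (i : List ℕ) (hi : IsReduced n i) :
    (∀ i', IsContractionD n i i' →
      ∃ Ψ : {p // p ∈ GP (n - 1) i'} → {q // q ∈ GP n i},
        Function.Injective Ψ ∧
        Set.range (fun p => (Ψ p).1) =
          {q | q ∈ GP n i ∧ ∀ t ∈ q.2, ¬ NodeOnWire i t (n + 1)}) ∧
    (∀ i', IsContractionA n i i' →
      ∃ Ψ : {p // p ∈ GP (n - 1) i'} → {q // q ∈ GP n i},
        Function.Injective Ψ ∧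
        Set.range (fun p => (Ψ p).1) =
          {q | q ∈ GP n i ∧ ∀ t ∈ q.2, ¬ NodeOnWire i t 1}) := by
  constructor
  · intro i' hi'
    obtain ⟨φ, hφ⟩ := hi'.exists_isWireDeletion hi
    exact hφ.exists_injective_range_eq (Or.inl ⟨rfl, rfl⟩) hi.letter_bounds
  · intro i' hi'
    obtain ⟨φ, hφ⟩ := hi'.exists_isWireDeletion hi
    exact hφ.exists_injective_range_eq (Or.inr ⟨rfl, rfl⟩) hi.letter_bounds

end StringPolytope
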